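/- There exist a constant c > 0 and a real number X₀ such that for all real X ≥ X₀, the number of negative squarefree integers d such that the absolute value of the discriminant of the imaginary quadratic field ℚ(√d) is at most X and the ideal class group Cl(ℚ(√d)) contains a subgroup isomorphic to (ℤ/5ℤ)² is at least c · X^(1/4). -/

import Mathlib

open NumberField

/-- `d` is a negative squarefree integer such that the imaginary quadratic field
`ℚ(√d)` (characterized as a degree-2 number field containing a square root of `d`)
has `|discriminant| ≤ X` and its ideal class group contains a subgroup isomorphic
to `(ℤ/5ℤ)²`. -/
def GoodRank5sq (X : ℝ) (d : ℤ) : Prop :=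
  d < 0 ∧ Squarefree d ∧
  ∀ (K : Type) [Field K] [NumberField K],
    (∃ x : K, x * x = (d : K)) → Module.finrank ℚ K = 2 →
      (|NumberField.discr K| : ℝ) ≤ X ∧
      ∃ f : Multiplicative (ZMod 5 × ZMod 5) →* ClassGroup (𝓞 K), Function.Injective f


section QuadField
variable {K : Type} [Field K] [NumberField K]

/-- A square root of a negative integer is not rational. -/
lemma qf_not_rat {d : ℤ} (hd : d < 0) {x : K} (hx : x * x = (d : K)) (q : ℚ) :
    algebraMap ℚ K q ≠ x := by
  intro h
  have h1 : algebraMap ℚ K (q * q) = algebraMap ℚ K (d : ℚ) := by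
    rw [map_mul, h, hx]; simp
  have h2 := (algebraMap ℚ K).injective h1
  have h3 : (d : ℚ) < 0 := by exact_mod_cast hd
  nlinarith [mul_self_nonneg q]

lemma qf_linInd {d : ℤ} (hd : d < 0) {x : K} (hx : x * x = (d : K)) :
    LinearIndependent ℚ ![(1 : K), x] := by
  rw [LinearIndependent.pair_iff]
  intro s t hst
  have ht : t = 0 := by
    by_contra ht
    apply qf_not_rat hd hx (-s / t)
    have hK : algebraMap ℚ K t ≠ 0 := by simpa using ht
    rw [Algebra.smul_def, Algebra.smul_def] at hst
    rw [map_div₀, map_neg, div_eq_iff hK]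
    linear_combination -hst
  subst ht
  simpa using hst

/-- The basis `1, √d`. -/
lemma qf_basis {d : ℤ} (hd : d < 0) {x : K} (hx : x * x = (d : K))
    (hK : Module.finrank ℚ K = 2) :
    ∃ b : Module.Basis (Fin 2) ℚ K, b 0 = 1 ∧ b 1 = x := by
  refine ⟨basisOfLinearIndependentOfCardEqFinrank (qf_linInd hd hx) (by simp [hK]), ?_, ?_⟩ <;> simp

lemma qf_repr {x : K} (b : Module.Basis (Fin 2) ℚ K) (h0 : b 0 = 1) (h1 : b 1 = x) (y : K) :
    ∃ r s : ℚ, y = algebraMap ℚ K r + algebraMap ℚ K s * x := by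
  refine ⟨b.repr y 0, b.repr y 1, ?_⟩
  conv_lhs => rw [← b.sum_repr y]
  simp [Fin.sum_univ_two, h0, h1, Algebra.smul_def]

lemma qf_mat {d : ℤ} {x : K} (hx : x * x = (d : K))
    (b : Module.Basis (Fin 2) ℚ K) (h0 : b 0 = 1) (h1 : b 1 = x) (r s : ℚ) :
    Algebra.leftMulMatrix b (algebraMap ℚ K r + algebraMap ℚ K s * x) = !![r, s * d; s, r] := by
  have e0 : (algebraMap ℚ K r + algebraMap ℚ K s * x) * b 0 = r • b 0 + s • b 1 := by
    simp [h0, h1, Algebra.smul_def]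
  have e1 : (algebraMap ℚ K r + algebraMap ℚ K s * x) * b 1 = (s * d) • b 0 + r • b 1 := by
    simp only [h0, h1, Algebra.smul_def, map_mul, map_intCast]
    linear_combination algebraMap ℚ K s * hx
  ext i j
  rw [Algebra.leftMulMatrix_eq_repr_mul]
  fin_cases j
  · simp only [Fin.zero_eta, e0]; fin_cases i <;> simp
  · simp only [Fin.mk_one, e1]; fin_cases i <;> simp

lemma qf_trace {d : ℤ} {x : K} (hx : x * x = (d : K))
    (b : Module.Basis (Fin 2) ℚ K) (h0 : b 0 = 1) (h1 : b 1 = x) (r s : ℚ) :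
    Algebra.trace ℚ K (algebraMap ℚ K r + algebraMap ℚ K s * x) = 2 * r := by
  rw [Algebra.trace_eq_matrix_trace b, qf_mat hx b h0 h1, Matrix.trace_fin_two]; simp; ring

lemma qf_norm {d : ℤ} {x : K} (hx : x * x = (d : K))
    (b : Module.Basis (Fin 2) ℚ K) (h0 : b 0 = 1) (h1 : b 1 = x) (r s : ℚ) :
    Algebra.norm ℚ (algebraMap ℚ K r + algebraMap ℚ K s * x) = r ^ 2 - d * s ^ 2 := by
  rw [Algebra.norm_eq_matrix_det b, qf_mat hx b h0 h1, Matrix.det_fin_two]; simp; ring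

/-- Every unit of an imaginary quadratic field is a 12th root of unity. -/
lemma qf_unit {d : ℤ} (hd : d < 0) {x : K} (hx : x * x = (d : K))
    (hK : Module.finrank ℚ K = 2) (e : (𝓞 K)ˣ) : ((e : 𝓞 K)) ^ 12 = 1 := by
  obtain ⟨b, h0, h1⟩ := qf_basis hd hx hK
  obtain ⟨r, s, hrs⟩ := qf_repr b h0 h1 ((e : 𝓞 K) : K)
  have hn := NumberField.isUnit_iff_norm.mp e.isUnit
  rw [RingOfIntegers.coe_norm, hrs, qf_norm hx b h0 h1] at hn
  have hIntg : IsIntegral ℤ (Algebra.trace ℚ K ((e : 𝓞 K) : K)) :=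
    Algebra.isIntegral_trace (RingOfIntegers.isIntegral_coe _)
  rw [hrs, qf_trace hx b h0 h1] at hIntg
  obtain ⟨t, ht⟩ := IsIntegrallyClosed.isIntegral_iff.mp hIntg
  have hd' : (d : ℚ) < 0 := by exact_mod_cast hd
  have hpos : 0 ≤ r ^ 2 - d * s ^ 2 := by nlinarith [sq_nonneg r, sq_nonneg s]
  rw [abs_of_nonneg hpos] at hn
  have ht' : (t : ℚ) = 2 * r := by simpa using ht
  have hr : r = t / 2 := by linarith
  have ht4 : t ^ 2 ≤ 4 := by
    have : (t : ℚ) ^ 2 ≤ 4 := by rw [ht']; nlinarith [sq_nonneg s]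
    exact_mod_cast this
  have hq : (((e : 𝓞 K) : K)) ^ 2 = (t : K) * ((e : 𝓞 K) : K) - 1 := by
    have hn' : algebraMap ℚ K (r ^ 2 - d * s ^ 2) = 1 := by rw [hn]; simp
    have htK : (t : K) = 2 * algebraMap ℚ K r := by
      have := congrArg (algebraMap ℚ K) ht'
      simpa using this
    rw [htK, hrs]
    simp only [map_sub, map_pow, map_mul, map_intCast] at hn'
    linear_combination -hn' + (algebraMap ℚ K s) ^ 2 * hx
  have hq' : (e : 𝓞 K) ^ 2 = (t : 𝓞 K) * (e : 𝓞 K) - 1 := by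
    apply RingOfIntegers.ext
    push_cast
    simpa using hq
  generalize (e : 𝓞 K) = w at hq' hq
  have hlo : -2 ≤ t := by nlinarith
  have hhi : t ≤ 2 := by nlinarith
  interval_cases t
  · have : (w + 1) ^ 2 = 0 := by push_cast at hq'; linear_combination hq'
    have hw : w = -1 := by
      have := pow_eq_zero_iff (two_ne_zero) |>.mp this
      linear_combination this
    rw [hw]; norm_num
  · have h3 : w ^ 3 = 1 := by push_cast at hq'; linear_combination (w - 1) * hq'
    calc w ^ 12 = (w ^ 3) ^ 4 := by ring
      _ = 1 := by rw [h3]; norm_num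
  · have h3 : w ^ 2 = -1 := by push_cast at hq'; linear_combination hq'
    calc w ^ 12 = (w ^ 2) ^ 6 := by ring
      _ = 1 := by rw [h3]; norm_num
  · have h3 : w ^ 3 = -1 := by push_cast at hq'; linear_combination (w + 1) * hq'
    calc w ^ 12 = (w ^ 3) ^ 4 := by ring
      _ = 1 := by rw [h3]; norm_num
  · have : (w - 1) ^ 2 = 0 := by push_cast at hq'; linear_combination hq'
    have hw : w = 1 := by
      have := pow_eq_zero_iff (two_ne_zero) |>.mp this
      linear_combination this
    rw [hw]; norm_num

/-- `4 d = N² disc`. -/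
lemma qf_discr {d : ℤ} (hd : d < 0) {x : K} (hx : x * x = (d : K))
    (hK : Module.finrank ℚ K = 2) : ∃ N : ℤ, 4 * d = N ^ 2 * NumberField.discr K := by
  obtain ⟨b, h0, h1⟩ := qf_basis hd hx hK
  have hxi : IsIntegral ℤ x := by
    refine ⟨Polynomial.X ^ 2 - Polynomial.C d, Polynomial.monic_X_pow_sub_C d two_ne_zero, ?_⟩
    rw [Polynomial.eval₂_sub, Polynomial.eval₂_X_pow, Polynomial.eval₂_C, pow_two, hx]; simp
  have hD : Algebra.discr ℚ b = 4 * d := by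
    have t1 : Algebra.trace ℚ K 1 = 2 := by
      have := qf_trace hx b h0 h1 1 0; simpa using this
    have t2 : Algebra.trace ℚ K x = 0 := by
      have := qf_trace hx b h0 h1 0 1; simpa using this
    have t3 : Algebra.trace ℚ K (x * x) = 2 * d := by
      have := qf_trace hx b h0 h1 d 0; rw [hx]; simpa using this
    rw [Algebra.discr_def, Matrix.det_fin_two]
    simp only [Algebra.traceMatrix_apply, Algebra.traceForm_apply, h0, h1, one_mul, mul_one, t1, t2, t3]
    ring
  let ι := Module.Free.ChooseBasisIndex ℤ (𝓞 K)
  have hc : Fintype.card ι = 2 := by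
    rw [← Module.finrank_eq_card_basis (integralBasis K), hK]
  let ε : ι ≃ Fin 2 := Fintype.equivFinOfCardEq hc
  let b' := (integralBasis K).reindex ε
  have hb' : Algebra.discr ℚ b' = NumberField.discr K := by
    rw [coe_discr, Module.Basis.coe_reindex, Algebra.discr_reindex]
  have hent : ∀ i j, ∃ n : ℤ, b'.toMatrix b i j = n := by
    intro i j
    have hIntg : IsIntegral ℤ (b j) := by
      fin_cases j
      · simp [h0, isIntegral_one]
      · simpa [h1] using hxi
    refine ⟨(RingOfIntegers.basis K).repr ⟨b j, hIntg⟩ (ε.symm i), ?_⟩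
    have := NumberField.integralBasis_repr_apply K ⟨b j, hIntg⟩ (ε.symm i)
    rw [Module.Basis.toMatrix_apply]
    simp only [b', Module.Basis.repr_reindex_apply]
    exact this
  choose P hP using hent
  refine ⟨(Matrix.of P).det, ?_⟩
  have hmat : b'.toMatrix b = (Matrix.of P).map (Int.cast : ℤ → ℚ) := by
    ext i j; simp [hP]
  have h2 := Algebra.discr_of_matrix_vecMul (A := ℚ) (b' : Fin 2 → K) (b'.toMatrix b)
  rw [Module.Basis.toMatrix_map_vecMul, hb', hD, hmat] at h2
  have h3 : ((Matrix.of P).map (Int.cast : ℤ → ℚ)).det = (((Matrix.of P).det : ℤ) : ℚ) := by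
    rw [Matrix.det_fin_two, Matrix.det_fin_two]; simp
  rw [h3] at h2
  exact_mod_cast h2

lemma qf_discr_le {d : ℤ} (hd : d < 0) {x : K} (hx : x * x = (d : K))
    (hK : Module.finrank ℚ K = 2) : |NumberField.discr K| ≤ 4 * |d| := by
  obtain ⟨N, hN⟩ := qf_discr hd hx hK
  have hN0 : N ≠ 0 := by rintro rfl; simp at hN; omega
  have : 1 ≤ N ^ 2 := by have := sq_pos_of_ne_zero hN0 |> Int.add_one_le_iff.mpr; simpa using this
  have h4 : 4 * |d| = N ^ 2 * |NumberField.discr K| := by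
    have := congrArg abs hN
    rwa [abs_mul, abs_mul, abs_of_nonneg (sq_nonneg N)] at this
  rw [h4]
  nlinarith [abs_nonneg (NumberField.discr K)]

lemma qf_le_discr {d : ℤ} (hd : d < 0) (hsq : Squarefree d) {x : K} (hx : x * x = (d : K))
    (hK : Module.finrank ℚ K = 2) : |d| ≤ |NumberField.discr K| := by
  obtain ⟨N, hN⟩ := qf_discr hd hx hK
  have hdis : NumberField.discr K ≠ 0 := NumberField.discr_ne_zero K
  by_cases hodd : Odd N
  · -- `N² ∣ d`
    have hco : IsCoprime (N ^ 2) 4 := by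
      have h2 : IsCoprime N 2 := by
        obtain ⟨k, hk⟩ := hodd
        exact ⟨1, -k, by rw [hk]; ring⟩
      have : (4 : ℤ) = 2 ^ 2 := by norm_num
      rw [this]; exact h2.pow
    have hdv : N ^ 2 ∣ d := hco.dvd_of_dvd_mul_left ⟨_, hN⟩
    have hu : IsUnit N := hsq N (by rwa [← pow_two])
    have hN2 : N ^ 2 = 1 := by rcases Int.isUnit_iff.mp hu with h | h <;> simp [h]
    rw [hN2, one_mul] at hN
    rw [← hN, abs_mul]
    have := abs_nonneg d
    norm_num; linarith
  · rw [Int.not_odd_iff_even] at hodd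
    obtain ⟨k, hk⟩ := hodd
    have hN' : d = k ^ 2 * NumberField.discr K := by
      rw [hk] at hN; nlinarith
    have hu : IsUnit k := hsq k ⟨NumberField.discr K, by rw [← pow_two]; exact hN'⟩
    have hN2 : k ^ 2 = 1 := by rcases Int.isUnit_iff.mp hu with h | h <;> simp [h]
    rw [hN2, one_mul] at hN'
    rw [hN']

end QuadField

section RankTwo

/-- Two independent classes of order 5 give a copy of `(ℤ/5)²`. -/
lemma rank_two_of_indep {G : Type*} [CommGroup G] (a b : G) (ha : a ^ 5 = 1) (hb : b ^ 5 = 1)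
    (h : ∀ i j : ℕ, i < 5 → j < 5 → a ^ i * b ^ j = 1 → i = 0 ∧ j = 0) :
    ∃ f : Multiplicative (ZMod 5 × ZMod 5) →* G, Function.Injective f := by
  let f : Multiplicative (ZMod 5 × ZMod 5) →* G :=
    { toFun := fun m => a ^ (Multiplicative.toAdd m).1.val * b ^ (Multiplicative.toAdd m).2.val
      map_one' := by simp
      map_mul' := by
        intro m n
        simp only [toAdd_mul, Prod.fst_add, Prod.snd_add, ZMod.val_add]
        rw [← pow_eq_pow_mod _ ha, ← pow_eq_pow_mod _ hb, pow_add, pow_add]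
        exact mul_mul_mul_comm _ _ _ _ }
  refine ⟨f, (injective_iff_map_eq_one f).mpr ?_⟩
  intro m hm
  obtain ⟨h1, h2⟩ := h _ _ (ZMod.val_lt _) (ZMod.val_lt _) hm
  have h1' := (ZMod.val_eq_zero _).mp h1
  have h2' := (ZMod.val_eq_zero _).mp h2
  apply Multiplicative.toAdd.injective
  exact Prod.ext h1' h2'

variable {K : Type} [Field K] [NumberField K]

/-- A residue field of characteristic `p` for a quadratic field. -/
lemma exists_residue (hK : Module.finrank ℚ K = 2) (p : ℕ) [hp : Fact p.Prime] :
    ∃ (F : Type) (_ : Field F) (_ : CharP F p) (_φ : 𝓞 K →+* F),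
      ∀ g : F, g ≠ 0 → g ^ (p ^ 2 - 1) = 1 := by
  have hpp := hp.out
  have hr : Module.finrank ℤ (𝓞 K) = 2 := by rw [RingOfIntegers.rank, hK]
  have hnorm : Ideal.absNorm (Ideal.span {(p : 𝓞 K)}) = p ^ 2 := by
    rw [Ideal.absNorm_span_singleton]
    have : ((p : 𝓞 K)) = algebraMap ℤ (𝓞 K) p := by simp
    rw [this, Algebra.norm_algebraMap, hr]
    simp [Int.natAbs_pow]
  have hne : Ideal.span {(p : 𝓞 K)} ≠ ⊤ := by
    intro h
    rw [h, Ideal.absNorm_top] at hnorm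
    have := hpp.two_le
    nlinarith
  obtain ⟨P, hP, hle⟩ := Ideal.exists_le_maximal _ hne
  have hdvd := Ideal.absNorm_dvd_absNorm_of_le hle
  rw [hnorm] at hdvd
  obtain ⟨k, hk, hk'⟩ := (Nat.dvd_prime_pow hpp).mp hdvd
  letI : Field (𝓞 K ⧸ P) := Ideal.Quotient.field P
  have hcard : Nat.card (𝓞 K ⧸ P) = p ^ k := by
    rw [← hk', Ideal.absNorm_apply, Submodule.cardQuot_apply]
  have hfin : Finite (𝓞 K ⧸ P) := by
    apply Nat.finite_of_card_ne_zero
    rw [hcard]; exact (pow_pos hpp.pos _).ne'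
  have hp0 : ((p : ℕ) : 𝓞 K ⧸ P) = 0 := by
    have : Ideal.Quotient.mk P (p : 𝓞 K) = 0 :=
      Ideal.Quotient.eq_zero_iff_mem.mpr (hle (Ideal.mem_span_singleton_self _))
    simpa using this
  have hchar : CharP (𝓞 K ⧸ P) p :=
    (CharP.charP_iff_prime_eq_zero hpp).mpr hp0
  refine ⟨𝓞 K ⧸ P, inferInstance, hchar, Ideal.Quotient.mk P, ?_⟩
  intro g hg
  letI := Fintype.ofFinite (𝓞 K ⧸ P)
  have h1 := FiniteField.pow_card_sub_one_eq_one g hg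
  rw [← Nat.card_eq_fintype_card, hcard] at h1
  have h2 : p ^ k - 1 ∣ p ^ 2 - 1 := by
    interval_cases k
    · have : Nat.card (𝓞 K ⧸ P) = 1 := by simpa using hcard
      have h3 := (Nat.card_eq_one_iff_unique.mp this).1
      exact absurd (Subsingleton.elim g 0) hg
    · have : p ^ 2 - 1 = (p ^ 1 - 1) * (p + 1) := by
        rw [pow_one, mul_comm, ← Nat.sq_sub_sq]
      exact ⟨_, this⟩
    · exact dvd_rfl
  obtain ⟨c, hc⟩ := h2
  rw [hc, pow_mul, h1, one_pow]

/-- The numerical witness that `α₁^i α₂^j` is not a fifth power. -/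
def ResOK (p n : ℕ) (D x1 y1 x2 y2 : ZMod p) (i j : ℕ) : Prop :=
  ∃ e : ZMod p, e * e = D ∧ ∀ σ : ZMod p, σ = e ∨ σ = -e →
    (x1 + y1 * σ) ^ i * (x2 + y2 * σ) ^ j ≠ 0 ∧
    ((x1 + y1 * σ) ^ i * (x2 + y2 * σ) ^ j) ^ n ≠ 1

lemma resOK_contra (hK : Module.finrank ℚ K = 2) (hu : ∀ e : (𝓞 K)ˣ, (e : 𝓞 K) ^ 12 = 1)
    (p n n' : ℕ) [hp : Fact p.Prime] (hn : p ^ 2 - 1 = 5 * n) (hn' : n = 12 * n')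
    (s : 𝓞 K) (D x1 y1 x2 y2 : ℤ) (hs : s * s = (D : 𝓞 K)) (i j : ℕ)
    (hres : ResOK p n (D : ZMod p) x1 y1 x2 y2 i j)
    (γ : 𝓞 K) (e : (𝓞 K)ˣ)
    (h : ((x1 : 𝓞 K) + y1 * s) ^ i * ((x2 : 𝓞 K) + y2 * s) ^ j = γ ^ 5 * e) : False := by
  obtain ⟨F, _, _, φ, hF⟩ := exists_residue (K := K) hK p
  obtain ⟨r, hr, hσ⟩ := hres
  let ψ : ZMod p →+* F := ZMod.castHom dvd_rfl F
  have hψ : Function.Injective ψ := ψ.injective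
  have h1 : φ s * φ s = ψ r * ψ r := by
    rw [← map_mul, ← map_mul, hs, hr]; simp
  have h2 : φ s = ψ r ∨ φ s = ψ (-r) := by
    rw [map_neg]; exact mul_self_eq_mul_self_iff.mp h1
  have key : ∀ σ : ZMod p, (σ = r ∨ σ = -r) → φ s = ψ σ → False := by
    intro σ hσr hφ
    obtain ⟨hw0, hw1⟩ := hσ σ hσr
    set w := ((x1 : ZMod p) + y1 * σ) ^ i * ((x2 : ZMod p) + y2 * σ) ^ j with hw
    have hφw : φ (γ ^ 5 * e) = ψ w := by
      rw [← h, hw]; simp [hφ]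
    have hne : φ (γ ^ 5 * e) ≠ 0 := by
      rw [hφw]; intro h0; exact hw0 (hψ (by rw [h0, map_zero]))
    have hγ : φ γ ≠ 0 := by
      intro h0; apply hne; rw [map_mul, map_pow, h0]; simp
    apply hw1
    apply hψ
    rw [map_pow, ← hφw, map_one, map_mul, map_pow, mul_pow, ← pow_mul, ← hn, hF _ hγ, one_mul,
      hn', pow_mul, ← map_pow, hu e, map_one, one_pow]
  rcases h2 with h2 | h2
  · exact key r (Or.inl rfl) h2
  · exact key (-r) (Or.inr rfl) h2

/-- `(x + y s)` is the fifth power of an ideal. -/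
lemma ideal_fifth_power (s : 𝓞 K) (D x y z : ℤ) (hs : s * s = (D : 𝓞 K))
    (h : x ^ 2 - D * y ^ 2 = z ^ 10) (hc : IsCoprime (2 * x) z) :
    ∃ J : Ideal (𝓞 K), Ideal.span {(x : 𝓞 K) + y * s} = J ^ 5 := by
  have hmul : ((x : 𝓞 K) + y * s) * ((x : 𝓞 K) - y * s) = ((z : 𝓞 K) ^ 2) ^ 5 := by
    have h' : ((x ^ 2 - D * y ^ 2 : ℤ) : 𝓞 K) = ((z ^ 10 : ℤ) : 𝓞 K) := by rw [h]
    push_cast at h'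
    linear_combination h' - (y : 𝓞 K) ^ 2 * hs
  have hcop : IsCoprime ((x : 𝓞 K) + y * s) ((x : 𝓞 K) - y * s) := by
    have h10 : IsCoprime (2 * x) (z ^ 10) := hc.pow_right
    obtain ⟨a, b, hab⟩ := h10
    have hab' : ((a * (2 * x) + b * z ^ 10 : ℤ) : 𝓞 K) = 1 := by rw [hab]; simp
    push_cast at hab'
    refine ⟨a + b * ((x : 𝓞 K) - y * s), a, ?_⟩
    linear_combination hab' + (b : 𝓞 K) * hmul
  refine exists_eq_pow_of_mul_eq_pow_of_coprime
    (b := Ideal.span {(x : 𝓞 K) - y * s}) (c := Ideal.span {(z : 𝓞 K) ^ 2}) ?_ ?_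
  · exact (Ideal.isCoprime_span_singleton_iff _ _).mpr hcop
  · rw [Ideal.span_singleton_mul_span_singleton, hmul, Ideal.span_singleton_pow]

/-- The class group criterion. -/
theorem class_rank_two (hK : Module.finrank ℚ K = 2) (hu : ∀ e : (𝓞 K)ˣ, (e : 𝓞 K) ^ 12 = 1)
    (s : 𝓞 K) (D x1 y1 z1 x2 y2 z2 : ℤ) (hs : s * s = (D : 𝓞 K))
    (h1 : x1 ^ 2 - D * y1 ^ 2 = z1 ^ 10) (hc1 : IsCoprime (2 * x1) z1) (hz1 : z1 ≠ 0)
    (h2 : x2 ^ 2 - D * y2 ^ 2 = z2 ^ 10) (hc2 : IsCoprime (2 * x2) z2) (hz2 : z2 ≠ 0)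
    (hres : ∀ i j : ℕ, i < 5 → j < 5 → ¬ (i = 0 ∧ j = 0) →
      ResOK 11 24 (D : ZMod 11) x1 y1 x2 y2 i j ∨ ResOK 31 192 (D : ZMod 31) x1 y1 x2 y2 i j) :
    ∃ f : Multiplicative (ZMod 5 × ZMod 5) →* ClassGroup (𝓞 K), Function.Injective f := by
  have hne : ∀ x y z : ℤ, x ^ 2 - D * y ^ 2 = z ^ 10 → z ≠ 0 → (x : 𝓞 K) + y * s ≠ 0 := by
    intro x y z h hz h0
    have h' : ((x ^ 2 - D * y ^ 2 : ℤ) : 𝓞 K) = ((z ^ 10 : ℤ) : 𝓞 K) := by rw [h]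
    push_cast at h'
    have : (z : 𝓞 K) ^ 10 = 0 := by
      rw [← h']
      linear_combination ((x : 𝓞 K) - y * s) * h0 + (y : 𝓞 K) ^ 2 * hs
    have := pow_eq_zero_iff (by norm_num) |>.mp this
    exact hz (by exact_mod_cast this)
  obtain ⟨J1, hJ1⟩ := ideal_fifth_power s D x1 y1 z1 hs h1 hc1
  obtain ⟨J2, hJ2⟩ := ideal_fifth_power s D x2 y2 z2 hs h2 hc2
  have hJ0 : ∀ (a : 𝓞 K) (J : Ideal (𝓞 K)), a ≠ 0 → Ideal.span {a} = J ^ 5 →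
      J ∈ nonZeroDivisors (Ideal (𝓞 K)) := by
    intro a J ha h
    apply mem_nonZeroDivisors_of_ne_zero
    rintro rfl
    rw [zero_pow (by norm_num)] at h
    apply ha
    exact Ideal.span_singleton_eq_bot.mp h
  have hm1 := hJ0 _ _ (hne _ _ _ h1 hz1) hJ1
  have hm2 := hJ0 _ _ (hne _ _ _ h2 hz2) hJ2
  have hfive : ∀ (a : 𝓞 K) (J : Ideal (𝓞 K)) (hm : J ∈ nonZeroDivisors (Ideal (𝓞 K))),
      Ideal.span {a} = J ^ 5 → ClassGroup.mk0 ⟨J, hm⟩ ^ 5 = 1 := by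
    intro a J hm h
    rw [← map_pow]
    have : (⟨J, hm⟩ : nonZeroDivisors (Ideal (𝓞 K))) ^ 5 = ⟨J ^ 5, pow_mem hm 5⟩ := rfl
    rw [this, ClassGroup.mk0_eq_one_iff, ← h]
    exact ⟨a, rfl⟩
  refine rank_two_of_indep (ClassGroup.mk0 ⟨J1, hm1⟩) (ClassGroup.mk0 ⟨J2, hm2⟩)
    (hfive _ _ hm1 hJ1) (hfive _ _ hm2 hJ2) ?_
  intro i j hi hj hij
  by_contra hcon
  rw [← map_pow, ← map_pow, ← map_mul] at hij
  have hprod : (⟨J1, hm1⟩ : nonZeroDivisors (Ideal (𝓞 K))) ^ i * ⟨J2, hm2⟩ ^ j =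
    ⟨J1 ^ i * J2 ^ j, mul_mem (pow_mem hm1 i) (pow_mem hm2 j)⟩ := rfl
  rw [hprod, ClassGroup.mk0_eq_one_iff] at hij
  obtain ⟨γ, hγ⟩ := hij
  have hspan : Ideal.span {γ ^ 5} =
      Ideal.span {((x1 : 𝓞 K) + y1 * s) ^ i * ((x2 : 𝓞 K) + y2 * s) ^ j} := by
    rw [← Ideal.span_singleton_mul_span_singleton, ← Ideal.span_singleton_pow,
      ← Ideal.span_singleton_pow, ← Ideal.span_singleton_pow, hJ1, hJ2]
    have : Ideal.span {γ} = J1 ^ i * J2 ^ j := hγ.symm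
    rw [this, mul_pow, ← pow_mul, ← pow_mul, ← pow_mul, ← pow_mul, mul_comm i, mul_comm j]
  rw [Ideal.span_singleton_eq_span_singleton] at hspan
  obtain ⟨e, he⟩ := hspan
  haveI : Fact (Nat.Prime 11) := ⟨by norm_num⟩
  haveI : Fact (Nat.Prime 31) := ⟨by norm_num⟩
  rcases hres i j hi hj hcon with hr | hr
  · exact resOK_contra hK hu 11 24 2 (by norm_num) (by norm_num) s D x1 y1 x2 y2 hs i j hr γ e he.symm
  · exact resOK_contra hK hu 31 192 16 (by norm_num) (by norm_num) s D x1 y1 x2 y2 hs i j hr γ e he.symm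

end RankTwo

section Family

/-- The radicand of the family. -/
def famD {R : Type*} [CommRing R] (u v : R) : R :=
  -(697 * (u ^ 2 + v ^ 2) * (311296 * (u ^ 2 + v ^ 2) ^ 2 - 485809 * (u ^ 2 * v ^ 2)))

/-- The norm parameter. -/
def famZ {R : Type*} [CommRing R] (u v : R) : R := 304 * u ^ 2 + 1001 * v ^ 2

/-- Auxiliary quadratic form value. -/
def famA {R : Type*} [CommRing R] (u v : R) : R :=
  famZ u v ^ 2 - 2736 * famZ u v * (u ^ 2 + v ^ 2) + 1169640 * (u ^ 2 + v ^ 2) ^ 2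

/-- Rational part. -/
def famX {R : Type*} [CommRing R] (u v : R) : R :=
  1394 * v ^ 2 * famA u v ^ 2 - famZ u v ^ 5

/-- Irrational part. -/
def famY {R : Type*} [CommRing R] (u v : R) : R :=
  152 * v * famA u v * (famZ u v - 342 * (u ^ 2 + v ^ 2))

lemma fam_identity (u v : ℤ) :
    famX u v ^ 2 - famD u v * famY u v ^ 2 = famZ u v ^ 10 := by
  simp only [famX, famD, famY, famA, famZ]; ring

lemma famD_symm (u v : ℤ) : famD v u = famD u v := by
  simp only [famD]; ring

lemma famD_cast (p : ℕ) (u v : ℤ) : ((famD u v : ℤ) : ZMod p) = famD (u : ZMod p) v := by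
  simp [famD]
lemma famX_cast (p : ℕ) (u v : ℤ) : ((famX u v : ℤ) : ZMod p) = famX (u : ZMod p) v := by
  simp [famX, famA, famZ]
lemma famY_cast (p : ℕ) (u v : ℤ) : ((famY u v : ℤ) : ZMod p) = famY (u : ZMod p) v := by
  simp [famY, famA, famZ]

lemma res11 (i j : ℕ) (hi : i < 5) (hj : j < 5) (h0 : ¬ (i = 0 ∧ j = 0)) (hij : j = 0) :
    ResOK 11 24 (famD 1 1) (famX 1 1) (famY 1 1) (famX 1 1) (famY 1 1) i j := by
  subst hij
  refine ⟨5, by decide, ?_⟩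
  interval_cases i
  · exact absurd ⟨rfl, rfl⟩ h0
  all_goals decide

lemma res31 (i j : ℕ) (hi : i < 5) (hj : j < 5) (hj0 : j ≠ 0) :
    ResOK 31 192 (famD 1 0) (famX 1 0) (famY 1 0) (famX 0 1) (famY 0 1) i j := by
  have e1 : (famX 1 0 : ZMod 31) + famY 1 0 * 11 = famX 1 0 := by decide
  refine ⟨11, by decide, ?_⟩
  interval_cases j
  · exact absurd rfl hj0
  all_goals
    interval_cases i
    all_goals decide +kernel

lemma fam_coprime (u v : ℤ) (huv : IsCoprime u v) (hz : IsCoprime (famZ u v) (397290)) :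
    IsCoprime (2 * famX u v) (famZ u v) := by
  have hN : ∀ p : ℤ, Prime p → p ∣ famZ u v → ¬ p ∣ 397290 := by
    intro p hp h1 h2
    exact hp.not_isUnit (hz.isUnit_of_dvd' h1 h2)
  have hN' : ∀ p : ℤ, Prime p → p ∣ famZ u v → ∀ c : ℤ, c ∣ 397290 ^ 4 → ¬ p ∣ c := by
    intro p hp h1 c hc h2
    exact hN p hp h1 (hp.dvd_of_dvd_pow (h2.trans hc))
  have hv : ∀ p : ℤ, Prime p → p ∣ famZ u v → ¬ p ∣ v := by
    intro p hp h1 h2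
    have h3 : p ∣ 304 * u ^ 2 := by
      have h4 : (304 * u ^ 2 : ℤ) = famZ u v - v * (1001 * v) := by simp only [famZ]; ring
      rw [h4]; exact dvd_sub h1 (h2.mul_right _)
    rcases hp.dvd_or_dvd h3 with h | h
    · exact hN' p hp h1 304 (by norm_num) h
    · exact hp.not_isUnit (huv.isUnit_of_dvd' (hp.dvd_of_dvd_pow h) h2)
  have hS : ∀ p : ℤ, Prime p → p ∣ famZ u v → ¬ p ∣ (u ^ 2 + v ^ 2) := by
    intro p hp h1 h2
    have h3 : p ∣ 697 * v ^ 2 := by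
      have h4 : (697 * v ^ 2 : ℤ) = famZ u v - (u ^ 2 + v ^ 2) * 304 := by simp only [famZ]; ring
      rw [h4]; exact dvd_sub h1 (h2.mul_right _)
    rcases hp.dvd_or_dvd h3 with h | h
    · exact hN' p hp h1 697 (by norm_num) h
    · exact hv p hp h1 (hp.dvd_of_dvd_pow h)
  have hA : ∀ p : ℤ, Prime p → p ∣ famZ u v → ¬ p ∣ famA u v := by
    intro p hp h1 h2
    have h3 : p ∣ 1169640 * (u ^ 2 + v ^ 2) ^ 2 := by
      have h4 : (1169640 * (u ^ 2 + v ^ 2) ^ 2 : ℤ) =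
        famA u v - famZ u v * (famZ u v - 2736 * (u ^ 2 + v ^ 2)) := by
        simp only [famA]; ring
      rw [h4]; exact dvd_sub h2 (h1.mul_right _)
    rcases hp.dvd_or_dvd h3 with h | h
    · exact hN' p hp h1 1169640 (by norm_num) h
    · exact hS p hp h1 (hp.dvd_of_dvd_pow h)
  have hz0 : famZ u v ≠ 0 := by
    intro h0
    rw [h0, isCoprime_zero_left] at hz
    rw [Int.isUnit_iff] at hz
    omega
  refine isCoprime_of_prime_dvd (fun h => hz0 h.2) ?_
  intro p hp h2 h1
  rcases hp.dvd_or_dvd h2 with h | h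
  · exact hN' p hp h1 2 (by norm_num) h
  · have h3 : p ∣ 1394 * v ^ 2 * famA u v ^ 2 := by
      have h4 : (1394 * v ^ 2 * famA u v ^ 2 : ℤ) = famX u v + famZ u v * famZ u v ^ 4 := by
        simp only [famX]; ring
      rw [h4]; exact dvd_add h (h1.mul_right _)
    rcases hp.dvd_or_dvd h3 with h | h
    · rcases hp.dvd_or_dvd h with h | h
      · exact hN' p hp h1 1394 (by norm_num) h
      · exact hv p hp h1 (hp.dvd_of_dvd_pow h)
    · exact hA p hp h1 (hp.dvd_of_dvd_pow h)

lemma famZ_coprime (u v : ℤ) (a b : ℤ) (hc : IsCoprime (famZ 1 3686694375 : ℤ) 397290)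
    (hu : u = 1 + 12328305990 * a) (hv : v = 3686694375 + 12328305990 * b) :
    IsCoprime (famZ u v) 397290 := by
  have : famZ u v = famZ 1 3686694375 + 397290 *
      (31031 * (304 * (2 * a + 12328305990 * a ^ 2)
        + 1001 * (2 * 3686694375 * b + 12328305990 * b ^ 2))) := by
    subst hu hv; simp only [famZ]; ring
  rw [this]
  exact hc.add_mul_left_left _

lemma famZ_coprime' (u v : ℤ) (a b : ℤ) (hc : IsCoprime (famZ 3686694375 1 : ℤ) 397290)
    (hu : u = 1 + 12328305990 * a) (hv : v = 3686694375 + 12328305990 * b) :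
    IsCoprime (famZ v u) 397290 := by
  have : famZ v u = famZ 3686694375 1 + 397290 *
      (31031 * (1001 * (2 * a + 12328305990 * a ^ 2)
        + 304 * (2 * 3686694375 * b + 12328305990 * b ^ 2))) := by
    subst hu hv; simp only [famZ]; ring
  rw [this]
  exact hc.add_mul_left_left _

lemma sqfree_dvd (S W a b : ℤ) (hS : Squarefree S) (hW : IsCoprime S W) (h : S * W = b ^ 2 * a) :
    S ∣ a := by
  have hb : IsCoprime S b := by
    refine isCoprime_of_prime_dvd (fun h => hS.ne_zero h.1) ?_
    intro p hp h1 h2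
    obtain ⟨s, rfl⟩ := h1
    obtain ⟨t, rfl⟩ := h2
    have h3 : s * W = p * (t ^ 2 * a) := by
      apply mul_left_cancel₀ hp.ne_zero
      linear_combination h
    rcases hp.dvd_or_dvd (Dvd.intro _ h3.symm) with h4 | h4
    · exact hp.not_isUnit (hS p (mul_dvd_mul_left p h4))
    · exact hp.not_isUnit (hW.isUnit_of_dvd' (dvd_mul_right p s) h4)
  exact (hb.pow_right (n := 2)).dvd_of_dvd_mul_left (Dvd.intro _ h)

end Family

section FamilyMain

lemma famD_good (u v a b : ℤ) (hu : u = 1 + 12328305990 * a)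
    (hv : v = 3686694375 + 12328305990 * b) (huv : IsCoprime u v)
    (K : Type) [Field K] [NumberField K] (d f : ℤ) (hd : d < 0) (hD : famD u v = f ^ 2 * d)
    (x : K) (hx : x * x = (d : K)) (hK : Module.finrank ℚ K = 2) :
    ∃ g : Multiplicative (ZMod 5 × ZMod 5) →* ClassGroup (𝓞 K), Function.Injective g := by
  have hxi : IsIntegral ℤ x := by
    refine ⟨Polynomial.X ^ 2 - Polynomial.C d, Polynomial.monic_X_pow_sub_C d two_ne_zero, ?_⟩
    rw [Polynomial.eval₂_sub, Polynomial.eval₂_pow, Polynomial.eval₂_X, Polynomial.eval₂_C, pow_two, hx]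
    simp
  let x' : 𝓞 K := ⟨x, hxi⟩
  have hx' : x' * x' = (d : 𝓞 K) := by
    apply RingOfIntegers.ext
    change algebraMap (𝓞 K) K (x' * x') = algebraMap (𝓞 K) K (d : 𝓞 K)
    rw [map_mul, map_intCast]
    exact hx
  have hc1 : IsCoprime (famZ u v) 397290 :=
    famZ_coprime u v a b (by simp only [famZ]; norm_num) hu hv
  have hc2 : IsCoprime (famZ v u) 397290 :=
    famZ_coprime' u v a b (by simp only [famZ]; norm_num) hu hv
  have hz0 : ∀ z : ℤ, IsCoprime z 397290 → z ≠ 0 := by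
    intro z hz h0
    rw [h0, isCoprime_zero_left] at hz
    rw [Int.isUnit_iff] at hz
    omega
  refine class_rank_two hK (qf_unit hd hx hK) ((f : 𝓞 K) * x') (famD u v) (famX u v) (famY u v)
    (famZ u v) (famX v u) (famY v u) (famZ v u) ?_ (fam_identity u v)
    (fam_coprime u v huv hc1) (hz0 _ hc1) (by rw [← famD_symm]; exact fam_identity v u)
    (fam_coprime v u huv.symm hc2) (hz0 _ hc2) ?_
  · rw [hD]; push_cast
    linear_combination (f : 𝓞 K) ^ 2 * hx'
  · intro i j hi hj hij
    have c11 : ((12328305990 : ℤ) : ZMod 11) = 0 := by decide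
    have c11' : ((3686694375 : ℤ) : ZMod 11) = 1 := by decide
    have c31 : ((12328305990 : ℤ) : ZMod 31) = 0 := by decide
    have c31' : ((3686694375 : ℤ) : ZMod 31) = 0 := by decide
    have hu11 : (u : ZMod 11) = 1 := by
      rw [hu, Int.cast_add, Int.cast_mul, c11]; simp
    have hv11 : (v : ZMod 11) = 1 := by
      rw [hv, Int.cast_add, Int.cast_mul, c11, c11']; simp
    have hu31 : (u : ZMod 31) = 1 := by
      rw [hu, Int.cast_add, Int.cast_mul, c31]; simp
    have hv31 : (v : ZMod 31) = 0 := by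
      rw [hv, Int.cast_add, Int.cast_mul, c31, c31']; simp
    by_cases hj0 : j = 0
    · left
      simp only [famD_cast, famX_cast, famY_cast, hu11, hv11]
      exact res11 i j hi hj hij hj0
    · right
      simp only [famD_cast, famX_cast, famY_cast, hu31, hv31]
      exact res31 i j hi hj hj0

lemma sqfree_coprime (u v : ℤ) (h : Squarefree (u ^ 2 + v ^ 2)) : IsCoprime u v := by
  refine isCoprime_of_prime_dvd ?_ ?_
  · rintro ⟨rfl, rfl⟩
    exact h.ne_zero (by norm_num)
  · rintro p hp ⟨s, rfl⟩ ⟨t, rfl⟩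
    exact hp.not_isUnit (h p ⟨s ^ 2 + t ^ 2, by ring⟩)

lemma coprime_cofactor (u v k : ℤ) (huv : IsCoprime u v) (hk : u ^ 2 + v ^ 2 = 1 + 697 * k) :
    IsCoprime (u ^ 2 + v ^ 2)
      (697 * (311296 * (u ^ 2 + v ^ 2) ^ 2 - 485809 * (u ^ 2 * v ^ 2))) := by
  have h697 : IsCoprime (u ^ 2 + v ^ 2) 697 := ⟨1, -k, by rw [hk]; ring⟩
  have hu : IsCoprime (u ^ 2 + v ^ 2) u := by
    have h1 : IsCoprime (v ^ 2) u := (huv.pow_right (n := 2)).symm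
    have h2 := h1.add_mul_left_left u
    rwa [show v ^ 2 + u * u = u ^ 2 + v ^ 2 by ring] at h2
  have hv : IsCoprime (u ^ 2 + v ^ 2) v := by
    have h1 : IsCoprime (u ^ 2) v := huv.pow_left
    have h2 := h1.add_mul_left_left v
    rwa [show u ^ 2 + v * v = u ^ 2 + v ^ 2 by ring] at h2
  refine h697.mul_right ?_
  have h3 : IsCoprime (u ^ 2 + v ^ 2) (-(697 ^ 2 * (u ^ 2 * v ^ 2))) :=
    ((h697.pow_right).mul_right (hu.pow_right.mul_right hv.pow_right)).neg_right
  have h4 := h3.add_mul_left_right (311296 * (u ^ 2 + v ^ 2))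
  rwa [show -(697 ^ 2 * (u ^ 2 * v ^ 2)) + (u ^ 2 + v ^ 2) * (311296 * (u ^ 2 + v ^ 2)) =
    311296 * (u ^ 2 + v ^ 2) ^ 2 - 485809 * (u ^ 2 * v ^ 2) by ring] at h4

theorem family_main (u v S : ℕ) (i j : ℕ) (hu : u = 1 + 12328305990 * i)
    (hv : v = 3686694375 + 12328305990 * j) (hS : S = u ^ 2 + v ^ 2) (hsq : Squarefree S) :
    ∃ d : ℤ, S ∣ d.natAbs ∧ Squarefree d.natAbs ∧ d.natAbs ≤ 216973312 * S ^ 3 ∧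
      ∀ X : ℝ, 4 * (216973312 * (S : ℝ) ^ 3) ≤ X → GoodRank5sq X d := by
  have hu' : (u : ℤ) = 1 + 12328305990 * (i : ℤ) := by rw [hu]; push_cast; rfl
  have hv' : (v : ℤ) = 3686694375 + 12328305990 * (j : ℤ) := by rw [hv]; push_cast; rfl
  have hS' : (S : ℤ) = (u : ℤ) ^ 2 + (v : ℤ) ^ 2 := by rw [hS]; push_cast; rfl
  have hsq' : Squarefree ((u : ℤ) ^ 2 + (v : ℤ) ^ 2) := by
    rw [← hS']; exact Int.squarefree_natCast.mpr hsq
  have huv := sqfree_coprime _ _ hsq'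
  have hSpos : (0 : ℤ) < S := by
    have := Nat.pos_of_ne_zero hsq.ne_zero
    exact_mod_cast this
  have hcop : IsCoprime ((u : ℤ) ^ 2 + (v : ℤ) ^ 2)
      (697 * (311296 * ((u : ℤ) ^ 2 + (v : ℤ) ^ 2) ^ 2 - 485809 * ((u : ℤ) ^ 2 * (v : ℤ) ^ 2))) := by
    refine coprime_cofactor _ _ (17687670 * (2 * i + 12328305990 * i ^ 2) +
      5289375 * v + 17687670 * j * v) huv ?_
    rw [hu', hv']; ring
  have hamgm : 4 * ((u : ℤ) ^ 2 * (v : ℤ) ^ 2) ≤ (S : ℤ) ^ 2 := by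
    rw [hS']; nlinarith [sq_nonneg ((u : ℤ) ^ 2 - (v : ℤ) ^ 2)]
  set T : ℤ := 311296 * (S : ℤ) ^ 2 - 485809 * ((u : ℤ) ^ 2 * (v : ℤ) ^ 2) with hT
  have hTpos : 0 < T := by nlinarith [pow_pos hSpos 2]
  have hTle : T ≤ 311296 * (S : ℤ) ^ 2 := by
    have : 0 ≤ (u : ℤ) ^ 2 * (v : ℤ) ^ 2 := by positivity
    rw [hT]; linarith
  have hDeq : famD (u : ℤ) v = -(S * (697 * T)) := by
    rw [hT, hS']; simp only [famD]; ring
  obtain ⟨a, b, hab, ha⟩ := Nat.sq_mul_squarefree (famD (u : ℤ) v).natAbs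
  have hnat : ((famD (u : ℤ) v).natAbs : ℤ) = S * (697 * T) := by
    rw [hDeq, Int.natAbs_neg, Int.natCast_natAbs, abs_of_pos (by positivity)]
  have hab' : (b : ℤ) ^ 2 * a = S * (697 * T) := by
    rw [← hnat, ← hab]; push_cast; rfl
  have hapos : 0 < a := Nat.pos_of_ne_zero ha.ne_zero
  have hbpos : 0 < b := by
    rcases Nat.eq_zero_or_pos b with rfl | h
    · exfalso
      have : (0 : ℤ) < S * (697 * T) := by positivity
      rw [← hab'] at this; simp at this
    · exact h
  have hSa : (S : ℤ) ∣ a := by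
    refine sqfree_dvd S (697 * T) a b (Int.squarefree_natCast.mpr hsq) ?_ hab'.symm
    rw [hT, hS']; exact hcop
  have hale : a ≤ 216973312 * S ^ 3 := by
    have h1 : (a : ℤ) ≤ b ^ 2 * a := by
      have : (1 : ℤ) ≤ (b : ℤ) ^ 2 := by exact_mod_cast Nat.one_le_pow _ _ hbpos
      nlinarith [hapos]
    have h2 : (S : ℤ) * (697 * T) ≤ S * (697 * (311296 * (S : ℤ) ^ 2)) := by gcongr
    have h3 : (a : ℤ) ≤ 216973312 * (S : ℤ) ^ 3 := by
      rw [hab'] at h1; linarith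
    exact_mod_cast h3
  have hneg : (-(a : ℤ)) < 0 := by omega
  refine ⟨-(a : ℤ), ?_, ?_, ?_, ?_⟩
  · rw [Int.natAbs_neg, Int.natAbs_natCast]; exact_mod_cast hSa
  · rw [Int.natAbs_neg, Int.natAbs_natCast]; exact ha
  · rw [Int.natAbs_neg, Int.natAbs_natCast]; exact hale
  · intro X hX
    refine ⟨hneg, Int.squarefree_natAbs.mp (by rwa [Int.natAbs_neg, Int.natAbs_natCast]), ?_⟩
    rintro K _ _ ⟨x, hx⟩ hK
    constructor
    · have h1 := qf_discr_le hneg hx hK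
      rw [abs_neg, Nat.abs_cast] at h1
      have h2 : ((|discr K| : ℤ) : ℝ) ≤ ((4 * (a : ℤ) : ℤ) : ℝ) := by exact_mod_cast h1
      have h3 : (a : ℝ) ≤ 216973312 * (S : ℝ) ^ 3 := by exact_mod_cast hale
      push_cast at h2
      linarith
    · refine famD_good u v i j hu' hv' huv K (-(a : ℤ)) b hneg ?_ x hx hK
      rw [hDeq, ← hab']; ring

end FamilyMain

section Counting

lemma cnt_ap (A : Finset ℕ) (a n r : ℕ) (hA : A ⊆ Finset.Ico a (a + n))
    (hc : ∀ x ∈ A, ∀ y ∈ A, x ≡ y [MOD r]) : A.card ≤ n / r + 1 := by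
  rw [← Finset.card_range (n / r + 1)]
  refine Finset.card_le_card_of_injOn (fun x => (x - a) / r) ?_ ?_
  · intro x hx
    have := Finset.mem_Ico.mp (hA hx)
    simp only [Finset.coe_range, Set.mem_Iio]
    exact Nat.lt_succ_of_le (Nat.div_le_div_right (by omega))
  · intro x hx y hy hxy
    have h1 := Finset.mem_Ico.mp (hA hx)
    have h2 := Finset.mem_Ico.mp (hA hy)
    have h3 := hc x hx y hy
    have h4 : x - a ≡ y - a [MOD r] := by
      apply Nat.ModEq.add_right_cancel' a
      rwa [Nat.sub_add_cancel h1.1, Nat.sub_add_cancel h2.1]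
    have h5 := Nat.div_add_mod (x - a) r
    have h6 := Nat.div_add_mod (y - a) r
    simp only at hxy
    rw [hxy, h4] at h5
    omega

lemma modEq_of_lin (M c p x y : ℕ) (hp : Nat.Coprime p M) (h : c + M * x ≡ c + M * y [MOD p]) :
    x ≡ y [MOD p] :=
  Nat.ModEq.cancel_left_of_coprime hp (Nat.ModEq.add_left_cancel' c h)

lemma sum_inv_sq (k n : ℕ) (hk : 0 < k) :
    ∑ p ∈ Finset.Ioc k n, ((p : ℝ) ^ 2)⁻¹ ≤ 1 / k := by
  rcases le_total k n with h | h
  · refine (sum_Ioc_inv_sq_le_sub hk.ne' h).trans ?_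
    have : (0 : ℝ) ≤ (n : ℝ)⁻¹ := by positivity
    rw [one_div]; linarith
  · rw [Finset.Ioc_eq_empty (by omega)]; simp

/-- pairs with a common prime factor -/
lemma bad1_card (M v0 I J m4 : ℕ) (hJ : 0 < J) (hI : I = J * m4)
    (B : Finset (ℕ × ℕ))
    (hB : ∀ q ∈ B, q.1 ∈ Finset.Ico I (2 * I) ∧ q.2 ∈ Finset.range J ∧ ∃ p : ℕ, p.Prime ∧ 18 < p ∧
      p ≤ M * J ∧ ¬ p ∣ M ∧ p ∣ 1 + M * q.1 ∧ p ∣ v0 + M * q.2) :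
    (B.card : ℝ) ≤ 4 * (I * J) * (1 / 18) + M * J * (m4 + 1) := by
  classical
  let P := (Finset.Ioc 18 (M * J)).filter (fun p => p.Prime ∧ ¬ p ∣ M)
  let F : ℕ → Finset (ℕ × ℕ) := fun p =>
    ((Finset.Ico I (2 * I)).filter (fun i => p ∣ 1 + M * i)) ×ˢ
      ((Finset.range J).filter (fun j => p ∣ v0 + M * j))
  have hsub : B ⊆ P.biUnion F := by
    intro q hq
    obtain ⟨h1, h2, p, hp, h18, hle, hpM, hp1, hp2⟩ := hB q hq
    rw [Finset.mem_biUnion]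
    refine ⟨p, Finset.mem_filter.mpr ⟨Finset.mem_Ioc.mpr ⟨h18, hle⟩, hp, hpM⟩, ?_⟩
    exact Finset.mem_product.mpr ⟨Finset.mem_filter.mpr ⟨h1, hp1⟩, Finset.mem_filter.mpr ⟨h2, hp2⟩⟩
  have hF : ∀ p ∈ P, ((F p).card : ℝ) ≤ 4 * (I * J) * ((p : ℝ) ^ 2)⁻¹ + (m4 + 1) := by
    intro p hp
    obtain ⟨hpI, hpp, hpM⟩ := Finset.mem_filter.mp hp
    have hcop : Nat.Coprime p M := (Nat.Prime.coprime_iff_not_dvd hpp).mpr hpM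
    have c1 : ((Finset.Ico I (2 * I)).filter (fun i => p ∣ 1 + M * i)).card ≤ I / p + 1 := by
      refine cnt_ap _ I I p ?_ ?_
      · rw [← two_mul]; exact Finset.filter_subset _ _
      · intro x hx y hy
        apply modEq_of_lin M 1 p x y hcop
        exact ((Nat.modEq_zero_iff_dvd.mpr (Finset.mem_filter.mp hx).2)).trans
          ((Nat.modEq_zero_iff_dvd.mpr (Finset.mem_filter.mp hy).2)).symm
    have c2 : ((Finset.range J).filter (fun j => p ∣ v0 + M * j)).card ≤ J / p + 1 := by
      refine cnt_ap _ 0 J p ?_ ?_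
      · rw [zero_add, ← Finset.range_eq_Ico]; exact Finset.filter_subset _ _
      · intro x hx y hy
        apply modEq_of_lin M v0 p x y hcop
        exact ((Nat.modEq_zero_iff_dvd.mpr (Finset.mem_filter.mp hx).2)).trans
          ((Nat.modEq_zero_iff_dvd.mpr (Finset.mem_filter.mp hy).2)).symm
    have c3 : (F p).card ≤ (I / p + 1) * (J / p + 1) := by
      rw [Finset.card_product]; exact Nat.mul_le_mul c1 c2
    have hp0 : (0 : ℝ) < p := by exact_mod_cast hpp.pos
    have c4 : ((F p).card : ℝ) ≤ (((I / p : ℕ) : ℝ) + 1) * (((J / p : ℕ) : ℝ) + 1) := by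
      exact_mod_cast c3
    rcases le_or_gt p J with h | h
    · have d1 : ((I / p : ℕ) : ℝ) ≤ (I : ℝ) / p := Nat.cast_div_le
      have d2 : ((J / p : ℕ) : ℝ) ≤ (J : ℝ) / p := Nat.cast_div_le
      have d3 : (1 : ℝ) ≤ (J : ℝ) / p := by
        rw [le_div_iff₀ hp0, one_mul]; exact_mod_cast h
      rcases Nat.eq_zero_or_pos m4 with h0 | h0
      · have hI0 : I = 0 := by rw [hI, h0, mul_zero]
        have : F p = ∅ := by simp [F, hI0]
        rw [this]; simp; positivity
      have d4 : (1 : ℝ) ≤ (I : ℝ) / p := by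
        rw [le_div_iff₀ hp0, one_mul]
        have : p ≤ I := h.trans (by rw [hI]; exact Nat.le_mul_of_pos_right _ h0)
        exact_mod_cast this
      have d5 : (((I / p : ℕ) : ℝ) + 1) * (((J / p : ℕ) : ℝ) + 1) ≤
          (2 * ((I : ℝ) / p)) * (2 * ((J : ℝ) / p)) := by
        apply mul_le_mul <;> first | positivity | linarith
      have d6 : (2 * ((I : ℝ) / p)) * (2 * ((J : ℝ) / p)) = 4 * (I * J) * ((p : ℝ) ^ 2)⁻¹ := by
        field_simp; ring
      have : (0 : ℝ) ≤ (m4 : ℝ) + 1 := by positivity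
      linarith
    · rw [Nat.div_eq_of_lt h] at c4
      have d1 : I / p ≤ m4 := by
        calc I / p ≤ I / J := Nat.div_le_div_left h.le hJ
          _ = m4 := by rw [hI, Nat.mul_div_cancel_left _ hJ]
      have d2 : ((I / p : ℕ) : ℝ) ≤ m4 := by exact_mod_cast d1
      have : (0 : ℝ) ≤ 4 * (I * J) * ((p : ℝ) ^ 2)⁻¹ := by positivity
      simp at c4
      linarith
  have h1 : (B.card : ℝ) ≤ ∑ p ∈ P, ((F p).card : ℝ) := by
    exact_mod_cast (Finset.card_le_card hsub).trans Finset.card_biUnion_le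
  have h2 : ∑ p ∈ P, ((F p).card : ℝ) ≤ ∑ p ∈ P, (4 * (I * J) * ((p : ℝ) ^ 2)⁻¹ + (m4 + 1)) :=
    Finset.sum_le_sum hF
  have h3 : ∑ p ∈ P, (4 * (I * J) * ((p : ℝ) ^ 2)⁻¹ + ((m4 : ℝ) + 1)) ≤
      ∑ p ∈ Finset.Ioc 18 (M * J), (4 * (I * J) * ((p : ℝ) ^ 2)⁻¹ + ((m4 : ℝ) + 1)) :=
    Finset.sum_le_sum_of_subset_of_nonneg (Finset.filter_subset _ _)
      (fun _ _ _ => by positivity)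
  have h3 := h2.trans h3
  rw [Finset.sum_add_distrib, ← Finset.mul_sum, Finset.sum_const, Nat.card_Ioc, nsmul_eq_mul] at h3
  have h4 := mul_le_mul_of_nonneg_left (sum_inv_sq 18 (M * J) (by norm_num))
    (show (0 : ℝ) ≤ 4 * (I * J) by positivity)
  have h5 : ((M * J - 18 : ℕ) : ℝ) * (m4 + 1) ≤ M * J * (m4 + 1) := by
    gcongr
    exact_mod_cast Nat.sub_le _ _
  push_cast at h4
  linarith

lemma dvd_congr_int {p a b : ℤ} (h : p ∣ a) (e : a = b) : p ∣ b := e ▸ h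

lemma sq_dvd_cases (p a b : ℤ) (hp : Prime p) (h : p ^ 2 ∣ a * b) (hab : ¬ (p ∣ a ∧ p ∣ b)) :
    p ^ 2 ∣ a ∨ p ^ 2 ∣ b := by
  by_cases ha : p ∣ a
  · left
    have hb : ¬ p ∣ b := fun hb => hab ⟨ha, hb⟩
    have hc : IsCoprime (p ^ 2) b := by
      refine IsCoprime.pow_left ?_
      exact (Prime.coprime_iff_not_dvd hp).mpr hb
    exact hc.dvd_of_dvd_mul_right h
  · right
    have hc : IsCoprime (p ^ 2) a := by
      refine IsCoprime.pow_left ?_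
      exact (Prime.coprime_iff_not_dvd hp).mpr ha
    exact hc.dvd_of_dvd_mul_left h

lemma bad2_aux (M v I p : ℕ) (hp : p.Prime) (h18 : 18 < p) (hpM : ¬ p ∣ M) (hv : ¬ p ∣ v)
    (A : Finset ℕ) (hA : A ⊆ Finset.Ico I (2 * I)) (hA' : ∀ i ∈ A, p ^ 2 ∣ (1 + M * i) ^ 2 + v ^ 2) :
    A.card ≤ 2 * (I / p ^ 2 + 1) := by
  classical
  rcases A.eq_empty_or_nonempty with rfl | ⟨i0, h0⟩
  · simp
  have hcop : Nat.Coprime (p ^ 2) M :=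
    Nat.Coprime.pow_left 2 ((Nat.Prime.coprime_iff_not_dvd hp).mpr hpM)
  have hpZ : Prime (p : ℤ) := Nat.prime_iff_prime_int.mp hp
  have hsplit : A = A.filter (fun i : ℕ => (p : ℤ) ^ 2 ∣ (1 + M * (i : ℤ)) - (1 + M * i0)) ∪
      A.filter (fun i : ℕ => (p : ℤ) ^ 2 ∣ (1 + M * (i : ℤ)) + (1 + M * i0)) := by
    rw [← Finset.filter_or]
    refine (Finset.filter_true_of_mem ?_).symm
    intro i hi
    have e1 : (p : ℤ) ^ 2 ∣ (1 + M * i) ^ 2 + v ^ 2 := by exact_mod_cast hA' i hi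
    have e2 : (p : ℤ) ^ 2 ∣ (1 + M * i0) ^ 2 + v ^ 2 := by exact_mod_cast hA' i0 h0
    refine sq_dvd_cases _ _ _ hpZ ?_ ?_
    · exact dvd_congr_int (dvd_sub e1 e2) (by ring)
    · rintro ⟨f1, f2⟩
      have f3 : (p : ℤ) ∣ 2 * (1 + M * i0) := by
        exact dvd_congr_int (dvd_sub f2 f1) (by ring)
      rcases hpZ.dvd_or_dvd f3 with f4 | f4
      · have : p ∣ 2 := by exact_mod_cast f4
        have := Nat.le_of_dvd (by norm_num) this
        omega
      · have f5 : (p : ℤ) ∣ v ^ 2 := by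
          exact dvd_congr_int (dvd_sub ((dvd_pow_self (p : ℤ) two_ne_zero).trans e2) (dvd_pow f4 two_ne_zero)) (by ring)
        exact hv (by exact_mod_cast hpZ.dvd_of_dvd_pow f5)
  have key : ∀ s : Finset ℕ, s ⊆ A → (∀ x ∈ s, ∀ y ∈ s, (p : ℤ) ^ 2 ∣ (1 + M * x) - (1 + M * y)) →
      s.card ≤ I / p ^ 2 + 1 := by
    intro s hs hxy
    refine cnt_ap s I I (p ^ 2) ?_ ?_
    · rw [← two_mul]; exact hs.trans hA
    · intro x hx y hy
      apply modEq_of_lin M 1 _ x y hcop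
      have := hxy y hy x hx
      apply (Nat.modEq_iff_dvd).mpr
      exact_mod_cast this
  rw [hsplit]
  refine (Finset.card_union_le _ _).trans ?_
  rw [two_mul]
  refine Nat.add_le_add (key _ (Finset.filter_subset _ _) ?_) (key _ (Finset.filter_subset _ _) ?_)
  · intro x hx y hy
    exact dvd_congr_int (dvd_sub (Finset.mem_filter.mp hx).2 (Finset.mem_filter.mp hy).2) (by ring)
  · intro x hx y hy
    exact dvd_congr_int (dvd_sub (Finset.mem_filter.mp hx).2 (Finset.mem_filter.mp hy).2) (by ring)

lemma bad2_card (M v0 I J Y : ℕ) (B : Finset (ℕ × ℕ))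
    (hB : ∀ q ∈ B, q.1 ∈ Finset.Ico I (2 * I) ∧ q.2 ∈ Finset.range J ∧ ∃ p : ℕ, p.Prime ∧ 18 < p ∧
      p ≤ Y ∧ ¬ p ∣ M ∧ ¬ p ∣ v0 + M * q.2 ∧ p ^ 2 ∣ (1 + M * q.1) ^ 2 + (v0 + M * q.2) ^ 2) :
    (B.card : ℝ) ≤ 2 * (I * J) * (1 / 18) + 2 * J * Y := by
  classical
  let A : ℕ × ℕ → Finset ℕ := fun jp => (Finset.Ico I (2 * I)).filter (fun i => jp.2.Prime ∧
    ¬ jp.2 ∣ M ∧ ¬ jp.2 ∣ v0 + M * jp.1 ∧ jp.2 ^ 2 ∣ (1 + M * i) ^ 2 + (v0 + M * jp.1) ^ 2)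
  let F : ℕ × ℕ → Finset (ℕ × ℕ) := fun jp => (A jp).image (fun i => (i, jp.1))
  have hsub : B ⊆ (Finset.range J ×ˢ Finset.Ioc 18 Y).biUnion F := by
    intro q hq
    obtain ⟨h1, h2, p, hp, h18, hle, hpM, hp1, hp2⟩ := hB q hq
    rw [Finset.mem_biUnion]
    refine ⟨(q.2, p), Finset.mem_product.mpr ⟨h2, Finset.mem_Ioc.mpr ⟨h18, hle⟩⟩, ?_⟩
    exact Finset.mem_image.mpr ⟨q.1, Finset.mem_filter.mpr ⟨h1, hp, hpM, hp1, hp2⟩, rfl⟩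
  have hF : ∀ jp ∈ Finset.range J ×ˢ Finset.Ioc 18 Y,
      ((F jp).card : ℝ) ≤ 2 * I * ((jp.2 : ℝ) ^ 2)⁻¹ + 2 := by
    rintro ⟨j, p⟩ hjp
    obtain ⟨hj, hp⟩ := Finset.mem_product.mp hjp
    have hp18 := (Finset.mem_Ioc.mp hp).1
    simp only at hp18 ⊢
    have c1 : (F (j, p)).card ≤ 2 * (I / p ^ 2 + 1) := by
      refine Finset.card_image_le.trans ?_
      rcases (A (j, p)).eq_empty_or_nonempty with h | ⟨i, hi⟩
      · rw [h]; simp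
      · obtain ⟨_, g1, g2, g3, _⟩ := Finset.mem_filter.mp hi
        exact bad2_aux M (v0 + M * j) I p g1 hp18 g2 g3 _ (Finset.filter_subset _ _)
          (fun i hi => (Finset.mem_filter.mp hi).2.2.2.2)
    have c2 : ((F (j, p)).card : ℝ) ≤ 2 * (((I / p ^ 2 : ℕ) : ℝ) + 1) := by exact_mod_cast c1
    have c3 : ((I / p ^ 2 : ℕ) : ℝ) ≤ (I : ℝ) / ((p ^ 2 : ℕ) : ℝ) := Nat.cast_div_le
    push_cast at c3
    rw [div_eq_mul_inv] at c3
    linarith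
  have h1 : (B.card : ℝ) ≤ ∑ p ∈ Finset.range J ×ˢ Finset.Ioc 18 Y, ((F p).card : ℝ) := by
    exact_mod_cast (Finset.card_le_card hsub).trans Finset.card_biUnion_le
  have h2 := h1.trans (Finset.sum_le_sum hF)
  rw [Finset.sum_product] at h2
  simp only [Finset.sum_const, Finset.card_range, nsmul_eq_mul, Finset.sum_add_distrib,
    ← Finset.mul_sum, Nat.card_Ioc] at h2
  have h4 := sum_inv_sq 18 Y (by norm_num)
  have h5 : ((Y - 18 : ℕ) : ℝ) ≤ Y := by exact_mod_cast Nat.sub_le _ _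
  calc (B.card : ℝ) ≤ _ := h2
    _ ≤ (J : ℝ) * (2 * I * (1 / 18) + Y * 2) := by
      push_cast at h4
      gcongr
    _ = _ := by ring

end Counting

section Counting2

lemma bad3_inj (p u v u' v' Y : ℕ) (hp : p.Prime) (hp2 : 2 < p) (huv : Nat.Coprime u v)
    (huv' : Nat.Coprime u' v') (hu : 0 < u) (hv' : 0 < v')
    (h1 : p ^ 2 ∣ u ^ 2 + v ^ 2) (h2 : p ^ 2 ∣ u' ^ 2 + v' ^ 2) (hY : Y < p)
    (hb : u * v' + u' * v ≤ Y ^ 2) : u = u' ∧ v = v' := by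
  have hpZ : Prime (p : ℤ) := Nat.prime_iff_prime_int.mp hp
  have e1 : (p : ℤ) ^ 2 ∣ (u : ℤ) ^ 2 + (v : ℤ) ^ 2 := by exact_mod_cast h1
  have e2 : (p : ℤ) ^ 2 ∣ (u' : ℤ) ^ 2 + (v' : ℤ) ^ 2 := by exact_mod_cast h2
  have hYp : Y ^ 2 < p ^ 2 := Nat.pow_lt_pow_left hY two_ne_zero
  have hlt : u * v' + u' * v < p ^ 2 := lt_of_le_of_lt hb hYp
  have hprod : (p : ℤ) ^ 2 ∣ ((u : ℤ) * v' - u' * v) * (u * v' + u' * v) :=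
    dvd_congr_int (dvd_sub (e1.mul_right ((v' : ℤ) ^ 2)) (e2.mul_right ((v : ℤ) ^ 2))) (by ring)
  have nodvd : ∀ a b : ℕ, Nat.Coprime a b → p ^ 2 ∣ a ^ 2 + b ^ 2 → ¬ p ∣ a ∧ ¬ p ∣ b := by
    intro a b hab hd
    have hd' : p ∣ a ^ 2 + b ^ 2 := (dvd_pow_self p two_ne_zero).trans hd
    constructor
    · intro ha
      have hb : p ∣ b ^ 2 := (Nat.dvd_add_right (dvd_pow ha two_ne_zero)).mp hd'
      exact Nat.not_coprime_of_dvd_of_dvd hp.one_lt ha (hp.dvd_of_dvd_pow hb) hab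
    · intro hb
      have ha : p ∣ a ^ 2 := (Nat.dvd_add_left (dvd_pow hb two_ne_zero)).mp hd'
      exact Nat.not_coprime_of_dvd_of_dvd hp.one_lt (hp.dvd_of_dvd_pow ha) hb hab
  have hcase := sq_dvd_cases _ _ _ hpZ hprod (by
    rintro ⟨f1, f2⟩
    have f3 : (p : ℤ) ∣ 2 * ((u : ℤ) * v') := dvd_congr_int (dvd_add f1 f2) (by ring)
    have f4 : p ∣ 2 * (u * v') := by exact_mod_cast f3
    rcases hp.dvd_mul.mp f4 with f | f
    · have := Nat.le_of_dvd (by norm_num) f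
      omega
    · rcases hp.dvd_mul.mp f with f | f
      · exact (nodvd u v huv h1).1 f
      · exact (nodvd u' v' huv' h2).2 f)
  have hpos : 0 < u * v' := Nat.mul_pos hu hv'
  have heq : u * v' = u' * v := by
    rcases hcase with h | h
    · have hz : (u : ℤ) * v' - u' * v = 0 := by
        apply Int.eq_zero_of_abs_lt_dvd h
        have a1 : (u : ℤ) * v' + u' * v < (p : ℤ) ^ 2 := by exact_mod_cast hlt
        have a2 : (0 : ℤ) ≤ (u : ℤ) * v' := by positivity
        have a3 : (0 : ℤ) ≤ (u' : ℤ) * v := by positivity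
        rw [abs_lt]; constructor <;> linarith
      have : (u : ℤ) * v' = u' * v := by linarith
      exact_mod_cast this
    · exfalso
      have h' : p ^ 2 ∣ u * v' + u' * v := by exact_mod_cast h
      have := Nat.le_of_dvd (by omega) h'
      omega
  have d1 : u ∣ u' := huv.dvd_of_dvd_mul_right (Dvd.intro _ heq)
  have d2 : u' ∣ u := huv'.dvd_of_dvd_mul_right (Dvd.intro _ heq.symm)
  have hu' := Nat.dvd_antisymm d1 d2
  refine ⟨hu', ?_⟩
  rw [← hu'] at heq
  exact (Nat.eq_of_mul_eq_mul_left hu heq).symm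

lemma bad3_card (M v0 Y Z : ℕ) (hM : 0 < M) (hv0 : 0 < v0) (hY2 : 2 ≤ Y) (B : Finset (ℕ × ℕ))
    (hb : ∀ q ∈ B, ∀ r ∈ B,
      (1 + M * q.1) * (v0 + M * r.2) + (1 + M * r.1) * (v0 + M * q.2) ≤ Y ^ 2)
    (hB : ∀ q ∈ B, Nat.Coprime (1 + M * q.1) (v0 + M * q.2) ∧ ∃ p : ℕ, p.Prime ∧
      Y < p ∧ p ≤ Z ∧ p ^ 2 ∣ (1 + M * q.1) ^ 2 + (v0 + M * q.2) ^ 2) :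
    B.card ≤ Z + 1 := by
  classical
  choose! P hP using fun q hq => (hB q hq).2
  rw [← Finset.card_range (Z + 1)]
  refine Finset.card_le_card_of_injOn P ?_ ?_
  · intro q hq
    simp only [Finset.coe_range, Set.mem_Iio]
    exact Nat.lt_succ_of_le (hP q hq).2.2.1
  · intro q hq r hr hqr
    obtain ⟨g1, g2, -, g4⟩ := hP q hq
    obtain ⟨k1, k2, -, k4⟩ := hP r hr
    rw [← hqr] at k4
    obtain ⟨w1, w2⟩ := bad3_inj (P q) _ _ _ _ Y g1 (lt_of_le_of_lt hY2 g2) (hB q hq).1 (hB r hr).1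
      (by omega) (by omega) g4 k4 g2 (hb q hq r hr)
    ext
    · exact Nat.eq_of_mul_eq_mul_left hM (by omega)
    · exact Nat.eq_of_mul_eq_mul_left hM (by omega)

lemma bad4_card (M v0 I J H : ℕ) (hM : 0 < M) (hv0 : v0 ≤ M) (hI : 0 < I) (hH : J ^ 2 ≤ I * H)
    (B : Finset (ℕ × ℕ))
    (hB : ∀ q ∈ B, I ≤ q.1 ∧ q.2 < J ∧ ∃ r : ℕ × ℕ, I ≤ r.1 ∧ r.2 < J ∧ r.1 < q.1 ∧
      (1 + M * q.1) ^ 2 + (v0 + M * q.2) ^ 2 = (1 + M * r.1) ^ 2 + (v0 + M * r.2) ^ 2) :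
    B.card ≤ J * J * (H + 1) := by
  classical
  choose! R hR using fun q hq => (hB q hq).2.2
  have hcard : ((Finset.range J ×ˢ Finset.range J) ×ˢ Finset.range (H + 1)).card
      = J * J * (H + 1) := by simp
  rw [← hcard]
  refine Finset.card_le_card_of_injOn (fun q => ((q.2, (R q).2), q.1 - (R q).1)) ?_ ?_
  · intro q hq
    obtain ⟨g1, g2, -⟩ := hB q hq
    obtain ⟨k1, k2, k3, k4⟩ := hR q hq
    have hh : q.1 - (R q).1 ≤ H := by
      obtain ⟨h, hh⟩ := Nat.exists_eq_add_of_lt k3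
      have hq1 : q.1 - (R q).1 = h + 1 := by omega
      rw [hq1]
      by_contra hcon
      push Not at hcon
      set r1 := (R q).1
      set r2 := (R q).2
      have e1 : v0 + M * r2 ≤ M * J := by
        calc v0 + M * r2 ≤ M + M * r2 := by omega
          _ = M * (r2 + 1) := by ring
          _ ≤ M * J := Nat.mul_le_mul_left _ k2
      have e2 : (v0 + M * r2) ^ 2 ≤ (M * J) ^ 2 := Nat.pow_le_pow_left e1 2
      have e3 : (1 + M * q.1) ^ 2 ≥ (1 + M * r1) ^ 2 + M * (h + 1) * (M * I) := by
        rw [hh]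
        have : M * (h + 1) * (M * I) ≤ M * (h + 1) * (M * r1) := by gcongr
        nlinarith [Nat.zero_le (M * (h + 1)), Nat.zero_le (M * (h + 1) * (M * (h + 1))), Nat.zero_le (M * (h + 1) * (M * r1))]
      have e4 : (M * J) ^ 2 ≤ M ^ 2 * (I * H) := by rw [mul_pow]; gcongr
      have e5 : M ^ 2 * (I * H) < M * (h + 1) * (M * I) := by
        have : M ^ 2 * I * H < M ^ 2 * I * (h + 1) := Nat.mul_lt_mul_of_pos_left hcon (by positivity)
        calc M ^ 2 * (I * H) = M ^ 2 * I * H := by ring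
          _ < M ^ 2 * I * (h + 1) := this
          _ = _ := by ring
      have e6 : 0 ≤ (v0 + M * q.2) ^ 2 := Nat.zero_le _
      omega
    simp only [Finset.coe_product, Finset.coe_range, Set.mem_prod, Set.mem_Iio]
    exact ⟨⟨g2, k2⟩, Nat.lt_succ_of_le hh⟩
  · intro q hq r hr hqr
    obtain ⟨g1, g2, -⟩ := hB q hq
    obtain ⟨k1, k2, k3, k4⟩ := hR q hq
    obtain ⟨k1', k2', k3', k4'⟩ := hR r hr
    simp only [Prod.mk.injEq] at hqr
    obtain ⟨⟨w1, w2⟩, w3⟩ := hqr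
    obtain ⟨h, hh⟩ := Nat.exists_eq_add_of_lt k3
    have hr' : r.1 = (R r).1 + h + 1 := by omega
    rw [← w2, ← w1, hr'] at k4'
    rw [hh] at k4
    have hx : (R q).1 = (R r).1 := by
      have a1 : ((1 + M * ((R q).1 + h + 1) : ℤ)) ^ 2 + (v0 + M * q.2) ^ 2 =
        (1 + M * (R q).1) ^ 2 + (v0 + M * (R q).2) ^ 2 := by exact_mod_cast k4
      have a2 : ((1 + M * ((R r).1 + h + 1) : ℤ)) ^ 2 + (v0 + M * q.2) ^ 2 =
        (1 + M * (R r).1) ^ 2 + (v0 + M * (R q).2) ^ 2 := by exact_mod_cast k4'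
      have a3 : (2 * M ^ 2 * (h + 1) : ℤ) * ((R q).1 - (R r).1) = 0 := by
        linear_combination a1 - a2
      rcases mul_eq_zero.mp a3 with a4 | a4
      · exfalso
        have : (0 : ℤ) < 2 * M ^ 2 * (h + 1) := by positivity
        omega
      · omega
    ext
    · omega
    · exact w1

theorem counting (M v0 : ℕ) (hv0 : 0 < v0) (hvM : v0 ≤ M)
    (hloc : ∀ p : ℕ, p.Prime → p ≤ 18 ∨ p ∣ M → ∀ i j : ℕ,
      ¬ p ^ 2 ∣ (1 + M * i) ^ 2 + (v0 + M * j) ^ 2) (m : ℕ) (hm : 72 * M ≤ m) :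
    ∃ T : Finset ℕ, m ^ 16 ≤ 2 * T.card ∧ ∀ S ∈ T, Squarefree S ∧ S ≤ 9 * M ^ 2 * m ^ 20 ∧
      ∃ i j : ℕ, S = (1 + M * i) ^ 2 + (v0 + M * j) ^ 2 := by
  classical
  have hM : 0 < M := by omega
  have hm0 : 0 < m := by omega
  set I := m ^ 10 with hI
  set J := m ^ 6 with hJ
  set Y := 2 * M * m ^ 8 with hY
  let U : ℕ → ℕ := fun i => 1 + M * i
  let V : ℕ → ℕ := fun j => v0 + M * j
  let Sf : ℕ × ℕ → ℕ := fun q => U q.1 ^ 2 + V q.2 ^ 2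
  let Q : Finset (ℕ × ℕ) := Finset.Ico I (2 * I) ×ˢ Finset.range J
  have hIpos : 0 < I := pow_pos hm0 _
  have hJpos : 0 < J := pow_pos hm0 _
  have hJI : J ≤ I := Nat.pow_le_pow_right hm0 (by norm_num)
  have hQ : ∀ q ∈ Q, q.1 ∈ Finset.Ico I (2 * I) ∧ q.2 ∈ Finset.range J :=
    fun q hq => Finset.mem_product.mp hq
  have hUb : ∀ q ∈ Q, U q.1 ≤ 2 * M * I := by
    intro q hq
    have h1 := (Finset.mem_Ico.mp (hQ q hq).1).2
    calc U q.1 ≤ M + M * q.1 := by simp only [U]; omega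
      _ = M * (q.1 + 1) := by ring
      _ ≤ M * (2 * I) := Nat.mul_le_mul_left _ h1
      _ = _ := by ring
  have hVb : ∀ q ∈ Q, V q.2 ≤ M * J := by
    intro q hq
    have h1 := Finset.mem_range.mp (hQ q hq).2
    calc V q.2 ≤ M + M * q.2 := by simp only [V]; omega
      _ = M * (q.2 + 1) := by ring
      _ ≤ M * J := Nat.mul_le_mul_left _ h1
  have hSb : ∀ q ∈ Q, Sf q ≤ 9 * M ^ 2 * I ^ 2 := by
    intro q hq
    have h1 := Nat.pow_le_pow_left (hUb q hq) 2
    have h2 := Nat.pow_le_pow_left ((hVb q hq).trans (Nat.mul_le_mul_left M hJI)) 2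
    have h3 : 0 ≤ M ^ 2 * I ^ 2 := Nat.zero_le _
    simp only [Sf]
    nlinarith
  let B1 := Q.filter (fun q => ∃ p : ℕ, p.Prime ∧ 18 < p ∧ p ≤ M * J ∧ ¬ p ∣ M ∧
    p ∣ 1 + M * q.1 ∧ p ∣ v0 + M * q.2)
  let B2 := Q.filter (fun q => ∃ p : ℕ, p.Prime ∧ 18 < p ∧
      p ≤ Y ∧ ¬ p ∣ M ∧ ¬ p ∣ v0 + M * q.2 ∧ p ^ 2 ∣ (1 + M * q.1) ^ 2 + (v0 + M * q.2) ^ 2)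
  let B3 := Q.filter (fun q => Nat.Coprime (1 + M * q.1) (v0 + M * q.2) ∧ ∃ p : ℕ, p.Prime ∧
      Y < p ∧ p ≤ 3 * M * I ∧ p ^ 2 ∣ (1 + M * q.1) ^ 2 + (v0 + M * q.2) ^ 2)
  let B4 := Q.filter (fun q => ∃ r : ℕ × ℕ, I ≤ r.1 ∧ r.2 < J ∧ r.1 < q.1 ∧
      (1 + M * q.1) ^ 2 + (v0 + M * q.2) ^ 2 = (1 + M * r.1) ^ 2 + (v0 + M * r.2) ^ 2)
  have c1 := bad1_card M v0 I J (m ^ 4) hJpos (by rw [hI, hJ]; ring) B1 (by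
    intro q hq
    obtain ⟨h1, h2⟩ := Finset.mem_filter.mp hq
    exact ⟨(hQ q h1).1, (hQ q h1).2, h2⟩)
  have c2 := bad2_card M v0 I J Y B2 (by
    intro q hq
    obtain ⟨h1, h2⟩ := Finset.mem_filter.mp hq
    exact ⟨(hQ q h1).1, (hQ q h1).2, h2⟩)
  have hm8 : 0 < m ^ 8 := pow_pos hm0 _
  have c3 := bad3_card M v0 Y (3 * M * I) hM hv0 (by rw [hY]; nlinarith) B3 (by
    intro q hq r hr
    have hq' := (Finset.mem_filter.mp hq).1
    have hr' := (Finset.mem_filter.mp hr).1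
    have e1 := Nat.mul_le_mul (hUb q hq') (hVb r hr')
    have e2 := Nat.mul_le_mul (hUb r hr') (hVb q hq')
    calc _ ≤ 2 * M * I * (M * J) + 2 * M * I * (M * J) := Nat.add_le_add e1 e2
      _ = Y ^ 2 := by rw [hI, hJ, hY]; ring) (by
    intro q hq
    exact (Finset.mem_filter.mp hq).2)
  have c4 := bad4_card M v0 I J (m ^ 2) hM hvM hIpos (by rw [hI, hJ]; apply le_of_eq; ring) B4 (by
    intro q hq
    obtain ⟨h1, h2⟩ := Finset.mem_filter.mp hq
    exact ⟨(Finset.mem_Ico.mp (hQ q h1).1).1, Finset.mem_range.mp (hQ q h1).2, h2⟩)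
  let G := Q \ (B1 ∪ B2 ∪ B3 ∪ B4)
  have hG : ∀ q ∈ G, q ∈ Q ∧ q ∉ B1 ∧ q ∉ B2 ∧ q ∉ B3 ∧ q ∉ B4 := by
    intro q hq
    simp only [G, Finset.mem_sdiff, Finset.mem_union, not_or] at hq
    tauto
  have hinj : Set.InjOn Sf (G : Set (ℕ × ℕ)) := by
    intro q hq r hr hqr
    obtain ⟨q0, -, -, -, q4⟩ := hG q hq
    obtain ⟨r0, -, -, -, r4⟩ := hG r hr
    have t1 : ¬ r.1 < q.1 := fun h => q4 (Finset.mem_filter.mpr ⟨q0, r,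
      (Finset.mem_Ico.mp (hQ r r0).1).1, Finset.mem_range.mp (hQ r r0).2, h, hqr⟩)
    have t2 : ¬ q.1 < r.1 := fun h => r4 (Finset.mem_filter.mpr ⟨r0, q,
      (Finset.mem_Ico.mp (hQ q q0).1).1, Finset.mem_range.mp (hQ q q0).2, h, hqr.symm⟩)
    have t3 : q.1 = r.1 := by omega
    have t4 : V q.2 ^ 2 = V r.2 ^ 2 := by
      simp only [Sf, t3] at hqr
      omega
    have t5 : V q.2 = V r.2 := Nat.pow_left_injective two_ne_zero t4
    ext
    · exact t3
    · simp only [V] at t5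
      exact Nat.eq_of_mul_eq_mul_left hM (by omega)
  have hsq : ∀ q ∈ G, Squarefree (Sf q) := by
    intro q hq
    obtain ⟨q0, q1, q2, q3, -⟩ := hG q hq
    rw [Nat.squarefree_iff_prime_squarefree]
    intro p hp hpd
    have hpd : p ^ 2 ∣ Sf q := by rwa [pow_two]
    have big : ∀ r : ℕ, r.Prime → r ^ 2 ∣ Sf q → 18 < r ∧ ¬ r ∣ M := by
      intro r hr hrd
      refine ⟨?_, ?_⟩
      · by_contra hc
        exact hloc r hr (Or.inl (by omega)) _ _ hrd
      · intro hc
        exact hloc r hr (Or.inr hc) _ _ hrd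
    by_cases hcop : Nat.Coprime (U q.1) (V q.2)
    · obtain ⟨p18, hpM⟩ := big p hp hpd
      have hpV : ¬ p ∣ V q.2 := by
        intro hV
        have hd' : p ∣ U q.1 ^ 2 + V q.2 ^ 2 := (dvd_pow_self p two_ne_zero).trans hpd
        have ha : p ∣ U q.1 ^ 2 := (Nat.dvd_add_left (dvd_pow hV two_ne_zero)).mp hd'
        exact Nat.not_coprime_of_dvd_of_dvd hp.one_lt (hp.dvd_of_dvd_pow ha) hV hcop
      rcases le_or_gt p Y with h | h
      · exact q2 (Finset.mem_filter.mpr ⟨q0, p, hp, p18, h, hpM, hpV, hpd⟩)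
      · refine q3 (Finset.mem_filter.mpr ⟨q0, hcop, p, hp, h, ?_, hpd⟩)
        have hpos : 0 < Sf q := by simp only [Sf, U]; positivity
        have h1 := (Nat.le_of_dvd hpos hpd).trans (hSb q q0)
        rw [show 9 * M ^ 2 * I ^ 2 = (3 * M * I) ^ 2 by ring] at h1
        exact (Nat.pow_le_pow_iff_left two_ne_zero).mp h1
    · obtain ⟨r, hr, hr1, hr2⟩ := Nat.Prime.not_coprime_iff_dvd.mp hcop
      have hrd : r ^ 2 ∣ Sf q := dvd_add (pow_dvd_pow_of_dvd hr1 2) (pow_dvd_pow_of_dvd hr2 2)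
      obtain ⟨r18, hrM⟩ := big r hr hrd
      have hle : r ≤ M * J := (Nat.le_of_dvd (by simp only [V]; omega) hr2).trans (hVb q q0)
      exact q1 (Finset.mem_filter.mpr ⟨q0, r, hr, r18, hle, hrM, hr1, hr2⟩)
  refine ⟨G.image Sf, ?_, ?_⟩
  · rw [Finset.card_image_of_injOn hinj]
    have hQc : Q.card = I * J := by
      simp only [Q, Finset.card_product, Nat.card_Ico, Finset.card_range]
      congr 1; omega
    have h1 : Q.card ≤ G.card + (B1.card + B2.card + B3.card + B4.card) := by
      have a1 := Finset.le_card_sdiff (B1 ∪ B2 ∪ B3 ∪ B4) Q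
      have a2 := Finset.card_union_le (B1 ∪ B2 ∪ B3) B4
      have a3 := Finset.card_union_le (B1 ∪ B2) B3
      have a4 := Finset.card_union_le B1 B2
      change Q.card - _ ≤ G.card at a1
      omega
    have h1' : (Q.card : ℝ) ≤ G.card + (B1.card + B2.card + B3.card + B4.card) := by
      exact_mod_cast h1
    have c3' : (B3.card : ℝ) ≤ 3 * M * I + 1 := by exact_mod_cast c3
    have c4' : (B4.card : ℝ) ≤ J * J * (m ^ 2 + 1) := by exact_mod_cast c4
    rw [hQc] at h1'
    have hIr : (I : ℝ) = (m : ℝ) ^ 10 := by rw [hI]; push_cast; rfl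
    have hJr : (J : ℝ) = (m : ℝ) ^ 6 := by rw [hJ]; push_cast; rfl
    have hYr : (Y : ℝ) = 2 * M * (m : ℝ) ^ 8 := by rw [hY]; push_cast; rfl
    push_cast at h1' c1
    rw [hIr, hJr] at h1' c1 c2
    rw [hJr] at c4'
    rw [hIr] at c3'
    rw [hYr] at c2
    have hmr : (72 * M : ℝ) ≤ m := by exact_mod_cast hm
    have hMr : (1 : ℝ) ≤ M := by exact_mod_cast hM
    have hm1 : (1 : ℝ) ≤ m := by exact_mod_cast hm0
    have p10 : (m : ℝ) ^ 10 ≤ (m : ℝ) ^ 14 := pow_le_pow_right₀ hm1 (by norm_num)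
    have p6 : (m : ℝ) ^ 6 ≤ (m : ℝ) ^ 14 := pow_le_pow_right₀ hm1 (by norm_num)
    have p12 : (m : ℝ) ^ 12 ≤ (m : ℝ) ^ 14 := pow_le_pow_right₀ hm1 (by norm_num)
    have p0 : (1 : ℝ) ≤ (m : ℝ) ^ 14 := one_le_pow₀ hm1
    have pM10 := mul_le_mul_of_nonneg_left p10 (show (0 : ℝ) ≤ M by positivity)
    have pM6 := mul_le_mul_of_nonneg_left p6 (show (0 : ℝ) ≤ M by positivity)
    have p14 : (m : ℝ) ^ 14 ≤ M * (m : ℝ) ^ 14 := by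
      apply le_mul_of_one_le_left (by positivity) hMr
    have p16 : 72 * (M * (m : ℝ) ^ 14) ≤ (m : ℝ) ^ 16 := by
      calc 72 * (M * (m : ℝ) ^ 14) = (72 * M) * (m : ℝ) ^ 14 := by ring
        _ ≤ m * (m : ℝ) ^ 14 := by gcongr
        _ = (m : ℝ) ^ 15 := by ring
        _ ≤ (m : ℝ) ^ 16 := pow_le_pow_right₀ hm1 (by norm_num)
    have fin : (m : ℝ) ^ 16 ≤ 2 * G.card := by
      ring_nf at h1' c1 c2 c3' c4' p16 pM10 pM6 p14 ⊢
      linarith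
    exact_mod_cast fin
  · intro S hS
    obtain ⟨q, hq, rfl⟩ := Finset.mem_image.mp hS
    refine ⟨hsq q hq, ?_, q.1, q.2, rfl⟩
    have := hSb q (hG q hq).1
    rw [hI, ← pow_mul] at this
    exact this

end Counting2

section Final

lemma divisor_bound (k : ℕ) : ∃ C : ℕ, 0 < C ∧ ∀ n : ℕ, Squarefree n →
    ∃ a : ℕ, a ^ k ≤ n ∧ n.divisors.card ≤ C * a := by
  obtain ⟨P, hP⟩ : ∃ P : ℕ, P = 2 ^ k := ⟨_, rfl⟩
  refine ⟨2 ^ P, by positivity, ?_⟩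
  intro n hn
  have hn0 : n ≠ 0 := hn.ne_zero
  refine ⟨2 ^ (n.primeFactors.filter (fun p => ¬ p < P)).card, ?_, ?_⟩
  · rw [← pow_mul, mul_comm, pow_mul, ← hP]
    calc P ^ (n.primeFactors.filter (fun p => ¬ p < P)).card
        = ∏ p ∈ n.primeFactors.filter (fun p => ¬ p < P), P := by rw [Finset.prod_const]
      _ ≤ ∏ p ∈ n.primeFactors.filter (fun p => ¬ p < P), p := by
          refine Finset.prod_le_prod' ?_
          intro p hp
          exact not_lt.mp (Finset.mem_filter.mp hp).2
      _ ≤ ∏ p ∈ n.primeFactors, p := by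
          refine Finset.prod_le_prod_of_subset_of_one_le' (Finset.filter_subset _ _) ?_
          intro p hp _
          exact (Nat.prime_of_mem_primeFactors hp).pos
      _ = n := Nat.prod_primeFactors_of_squarefree hn
  · rw [Nat.card_divisors hn0]
    calc ∏ x ∈ n.primeFactors, (n.factorization x + 1)
        ≤ ∏ x ∈ n.primeFactors, 2 := by
          refine Finset.prod_le_prod' ?_
          intro p _
          have := hn.natFactorization_le_one p
          omega
      _ = 2 ^ n.primeFactors.card := by rw [Finset.prod_const]
      _ = 2 ^ (n.primeFactors.filter (fun p => p < P)).card *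
          2 ^ (n.primeFactors.filter (fun p => ¬ p < P)).card := by
          rw [← pow_add, Finset.card_filter_add_card_filter_not]
      _ ≤ _ := by
          refine Nat.mul_le_mul_right _ (Nat.pow_le_pow_right (by norm_num) ?_)
          calc _ ≤ (Finset.range P).card := by
                refine Finset.card_le_card ?_
                intro p hp
                exact Finset.mem_range.mpr (Finset.mem_filter.mp hp).2
            _ = P := Finset.card_range P

lemma local_cond (p : ℕ) (hp : p.Prime) (h : p ≤ 18 ∨ p ∣ 12328305990) (i j : ℕ) :
    ¬ p ^ 2 ∣ (1 + 12328305990 * i) ^ 2 + (3686694375 + 12328305990 * j) ^ 2 := by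
  intro hd
  have hpM : p ∣ 12328305990 := by
    rcases h with h | h
    · have := hp.two_le
      interval_cases p <;> first | (norm_num; done) | (exfalso; revert hp; norm_num; done)
    · exact h
  have hd1 : p ∣ (1 + 12328305990 * i) ^ 2 + (3686694375 + 12328305990 * j) ^ 2 :=
    (dvd_pow_self p two_ne_zero).trans hd
  have e : (1 + 12328305990 * i) ^ 2 + (3686694375 + 12328305990 * j) ^ 2 =
      (1 + 3686694375 ^ 2) + 12328305990 * (2 * i + 12328305990 * i ^ 2 +
        2 * 3686694375 * j + 12328305990 * j ^ 2) := by ring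
  rw [e] at hd1
  have hd2 : p ∣ 1 + 3686694375 ^ 2 := (Nat.dvd_add_left (hpM.mul_right _)).mp hd1
  have hg : Nat.gcd 12328305990 (1 + 3686694375 ^ 2) = 2 := by norm_num
  have h2 : p ∣ 2 := by rw [← hg]; exact Nat.dvd_gcd hpM hd2
  have hp2 : p = 2 := (Nat.prime_dvd_prime_iff_eq hp Nat.prime_two).mp h2
  subst hp2
  have e2 : (1 + 12328305990 * i) ^ 2 + (3686694375 + 12328305990 * j) ^ 2 =
      2 ^ 2 * (6164152995 * i + 6164152995 ^ 2 * i ^ 2 +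
        6164152995 * 3686694375 * j + 6164152995 ^ 2 * j ^ 2 + 1843347187 * 1843347188) + 2 := by
    ring
  rw [e2] at hd
  have := (Nat.dvd_add_right (Dvd.intro _ rfl)).mp hd
  norm_num at this

lemma exists_quad_field (d : ℤ) (hd : d < 0) :
    ∃ (K : Type) (_ : Field K) (_ : NumberField K), (∃ x : K, x * x = (d : K)) ∧
      Module.finrank ℚ K = 2 := by
  haveI : Fact (∀ r : ℚ, r ^ 2 ≠ (d : ℚ) + 0 * r) := ⟨by
    intro r h
    have h1 : (d : ℚ) < 0 := by exact_mod_cast hd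
    nlinarith [sq_nonneg r]⟩
  have hf : Module.finrank ℚ (QuadraticAlgebra ℚ (d : ℚ) 0) = 2 :=
    QuadraticAlgebra.finrank_eq_two _ _
  have hfd : FiniteDimensional ℚ (QuadraticAlgebra ℚ (d : ℚ) 0) := inferInstance
  have hc : CharZero (QuadraticAlgebra ℚ (d : ℚ) 0) :=
    algebraRat.charZero _
  refine ⟨QuadraticAlgebra ℚ (d : ℚ) 0, inferInstance, ?_, ?_, ?_⟩
  · refine @NumberField.mk _ _ hc ?_
    convert hfd
  · refine ⟨⟨0, 1⟩, ?_⟩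
    ext <;> simp
  · convert hf

lemma good_finite (X : ℝ) : {d : ℤ | GoodRank5sq X d}.Finite := by
  refine (Set.finite_Icc (-⌈|X|⌉) ⌈|X|⌉).subset ?_
  rintro d ⟨hd, hsq, h⟩
  obtain ⟨K, _, _, ⟨x, hx⟩, hK⟩ := exists_quad_field d hd
  have h1 := (h K ⟨x, hx⟩ hK).1
  have h2 := qf_le_discr hd hsq hx hK
  have h3 : ((|d| : ℤ) : ℝ) ≤ ((|discr K| : ℤ) : ℝ) := by exact_mod_cast h2
  have h4 : ((|d| : ℤ) : ℝ) ≤ (⌈|X|⌉ : ℝ) := by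
    push_cast at h3 ⊢
    exact h3.trans (h1.trans ((le_abs_self X).trans (Int.le_ceil _)))
  have h5 : |d| ≤ ⌈|X|⌉ := by exact_mod_cast h4
  exact abs_le.mp h5

lemma count_fin (M v0 c0 C1 C m : ℕ) (hC1 : C1 = c0 * (9 * M ^ 2) ^ 3) (hC1p : 0 < C1)
    (hm0 : 0 < m)
    (hdiv : ∀ n : ℕ, Squarefree n → ∃ a : ℕ, a ^ 60 ≤ n ∧ n.divisors.card ≤ C * a)
    (T : Finset ℕ) (hT : m ^ 16 ≤ 2 * T.card)
    (hTS : ∀ S ∈ T, Squarefree S ∧ S ≤ 9 * M ^ 2 * m ^ 20 ∧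
      ∃ i j : ℕ, S = (1 + M * i) ^ 2 + (v0 + M * j) ^ 2)
    (hfam : ∀ S i j : ℕ, S = (1 + M * i) ^ 2 + (v0 + M * j) ^ 2 → Squarefree S →
      ∃ d : ℤ, S ∣ d.natAbs ∧ Squarefree d.natAbs ∧ d.natAbs ≤ c0 * S ^ 3 ∧
      ∀ X : ℝ, 4 * (c0 * (S : ℝ) ^ 3) ≤ X → GoodRank5sq X d)
    (X : ℝ) (hX : 4 * C1 * (m : ℝ) ^ 60 ≤ X) :
    m ^ 15 ≤ 2 * C * C1 * {d : ℤ | GoodRank5sq X d}.ncard := by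
  classical
  have hex : ∀ S ∈ T, ∃ d : ℤ, S ∣ d.natAbs ∧ Squarefree d.natAbs ∧ d.natAbs ≤ C1 * m ^ 60 ∧
      GoodRank5sq X d := by
    intro S hS
    obtain ⟨h1, h2, i, j, h3⟩ := hTS S hS
    obtain ⟨d, g1, g2, g3, g4⟩ := hfam S i j h3 h1
    have hle : c0 * S ^ 3 ≤ C1 * m ^ 60 := by
      calc c0 * S ^ 3 ≤ c0 * (9 * M ^ 2 * m ^ 20) ^ 3 := by gcongr
        _ = _ := by rw [hC1]; ring
    have hle' : (c0 : ℝ) * (S : ℝ) ^ 3 ≤ C1 * (m : ℝ) ^ 60 := by exact_mod_cast hle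
    exact ⟨d, g1, g2, g3.trans hle, g4 X (by linarith)⟩
  choose! f hf using hex
  have hcard : T.card ≤ (T.image f).card * (C * (C1 * m)) := by
    have hsub : T ⊆ (T.image f).biUnion (fun d => d.natAbs.divisors) := by
      intro S hS
      rw [Finset.mem_biUnion]
      exact ⟨f S, Finset.mem_image_of_mem _ hS,
        Nat.mem_divisors.mpr ⟨(hf S hS).1, (hf S hS).2.1.ne_zero⟩⟩
    refine (Finset.card_le_card hsub).trans (Finset.card_biUnion_le_card_mul _ _ _ ?_)
    intro d hd
    obtain ⟨S, hS, rfl⟩ := Finset.mem_image.mp hd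
    obtain ⟨a, ha, hb⟩ := hdiv _ (hf S hS).2.1
    refine hb.trans (Nat.mul_le_mul_left _ ?_)
    have h1 : a ^ 60 ≤ (C1 * m) ^ 60 := by
      calc a ^ 60 ≤ C1 * m ^ 60 := ha.trans (hf S hS).2.2.1
        _ ≤ C1 ^ 60 * m ^ 60 := Nat.mul_le_mul_right _ (Nat.le_self_pow (by norm_num) _)
        _ = _ := by rw [mul_pow]
    exact (Nat.pow_le_pow_iff_left (by norm_num)).mp h1
  have hnc : (T.image f).card ≤ {d : ℤ | GoodRank5sq X d}.ncard := by
    rw [← Set.ncard_coe_finset]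
    refine Set.ncard_le_ncard ?_ (good_finite X)
    intro d hd
    obtain ⟨S, hS, rfl⟩ := Finset.mem_image.mp hd
    exact (hf S hS).2.2.2
  have h1 : m * m ^ 15 ≤ m * (2 * C * C1 * {d : ℤ | GoodRank5sq X d}.ncard) := by
    calc m * m ^ 15 = m ^ 16 := by ring
      _ ≤ 2 * T.card := hT
      _ ≤ 2 * ({d : ℤ | GoodRank5sq X d}.ncard * (C * (C1 * m))) :=
        Nat.mul_le_mul_left _ (hcard.trans (Nat.mul_le_mul_right _ hnc))
      _ = _ := by ring
  exact Nat.le_of_mul_le_mul_left h1 hm0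

lemma final_abstract (N : ℝ → ℕ) (M0 C1 C : ℕ) (hM0 : 0 < M0) (hC1 : 0 < C1) (hC : 0 < C)
    (h : ∀ m : ℕ, M0 ≤ m → ∀ X : ℝ, 4 * C1 * (m : ℝ) ^ 60 ≤ X → m ^ 15 ≤ 2 * C * C1 * N X) :
    ∃ c : ℝ, 0 < c ∧ ∃ X₀ : ℝ, ∀ X : ℝ, X₀ ≤ X → c * X ^ ((1 : ℝ) / 4) ≤ (N X : ℝ) := by
  have hC1r : (0 : ℝ) < C1 := by exact_mod_cast hC1
  have hCr : (0 : ℝ) < C := by exact_mod_cast hC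
  obtain ⟨W, hW⟩ : ∃ W : ℝ, W = 4 * C1 := ⟨_, rfl⟩
  have hWp : 0 < W := by rw [hW]; positivity
  set R : ℝ := W ^ ((1 : ℝ) / 4) with hR
  have hRp : 0 < R := Real.rpow_pos_of_pos hWp _
  refine ⟨1 / (R * 2 ^ 15 * (2 * C * C1)), by positivity, W * (M0 : ℝ) ^ 60, ?_⟩
  intro X hX
  have hM0r : (1 : ℝ) ≤ M0 := by exact_mod_cast hM0
  have hXW : (M0 : ℝ) ^ 60 ≤ X / W := by rw [le_div_iff₀ hWp]; linarith
  have hXp : 0 ≤ X / W := le_trans (by positivity) hXW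
  set t : ℝ := (X / W) ^ ((1 : ℝ) / 60) with ht
  have ht0 : 0 ≤ t := Real.rpow_nonneg hXp _
  have ht60 : t ^ 60 = X / W := by
    rw [ht, ← Real.rpow_natCast, ← Real.rpow_mul hXp]; norm_num
  have hMt : (M0 : ℝ) ≤ t := by
    rw [← ht60] at hXW
    exact le_of_pow_le_pow_left₀ (by norm_num) ht0 hXW
  have hm : M0 ≤ ⌊t⌋₊ := Nat.le_floor hMt
  have hmt : (⌊t⌋₊ : ℝ) ≤ t := Nat.floor_le ht0
  have ht2 : t ≤ 2 * (⌊t⌋₊ : ℝ) := by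
    have h1 := (Nat.lt_floor_add_one t).le
    have h2 : (1 : ℝ) ≤ (⌊t⌋₊ : ℝ) := by exact_mod_cast (show 1 ≤ ⌊t⌋₊ by omega)
    linarith
  have hXt : X = W * t ^ 60 := by rw [ht60]; field_simp
  have key := h ⌊t⌋₊ hm X (by
    rw [hXt, hW]
    gcongr)
  have key' : ((⌊t⌋₊ : ℝ)) ^ 15 ≤ 2 * C * C1 * (N X : ℝ) := by exact_mod_cast key
  have hX4 : X ^ ((1 : ℝ) / 4) = R * t ^ 15 := by
    rw [hXt, Real.mul_rpow hWp.le (by positivity), ← Real.rpow_natCast t 60, ← Real.rpow_mul ht0,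
      ← Real.rpow_natCast t 15]
    norm_num [hR]
  have ht15 : t ^ 15 ≤ 2 ^ 15 * (⌊t⌋₊ : ℝ) ^ 15 := by
    rw [← mul_pow]; gcongr
  rw [hX4, div_mul_eq_mul_div, one_mul, div_le_iff₀ (by positivity)]
  calc R * t ^ 15 ≤ R * (2 ^ 15 * (2 * C * C1 * (N X : ℝ))) := by
        gcongr
        exact ht15.trans (by gcongr)
    _ = _ := by ring

end Final

/-- Byeon: there are `≫ X^(1/4)` imaginary quadratic fields with `|d_k| ≤ X`
whose ideal class group has 5-rank at least 2. -/
theorem count_imag_quad_5rank_two_quarter :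
    ∃ c : ℝ, 0 < c ∧ ∃ X₀ : ℝ, ∀ X : ℝ, X₀ ≤ X →
      c * X ^ ((1 : ℝ) / 4) ≤ ({d : ℤ | GoodRank5sq X d}.ncard : ℝ) := by
  obtain ⟨C, hC, hdiv⟩ := divisor_bound 60
  obtain ⟨M, hM⟩ : ∃ M : ℕ, M = 12328305990 := ⟨_, rfl⟩
  obtain ⟨v0, hv0⟩ : ∃ v0 : ℕ, v0 = 3686694375 := ⟨_, rfl⟩
  obtain ⟨c0, hc0⟩ : ∃ c0 : ℕ, c0 = 216973312 := ⟨_, rfl⟩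
  have hMp : 0 < M := by omega
  have hc0p : 0 < c0 := by omega
  have hloc : ∀ p : ℕ, p.Prime → p ≤ 18 ∨ p ∣ M → ∀ i j : ℕ,
      ¬ p ^ 2 ∣ (1 + M * i) ^ 2 + (v0 + M * j) ^ 2 := by
    intro p hp h i j
    rw [hM, hv0]
    exact local_cond p hp (by rwa [hM] at h) i j
  have hfam : ∀ S i j : ℕ, S = (1 + M * i) ^ 2 + (v0 + M * j) ^ 2 → Squarefree S →
      ∃ d : ℤ, S ∣ d.natAbs ∧ Squarefree d.natAbs ∧ d.natAbs ≤ c0 * S ^ 3 ∧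
      ∀ X : ℝ, 4 * (c0 * (S : ℝ) ^ 3) ≤ X → GoodRank5sq X d := by
    intro S i j hS hsq
    obtain ⟨d, g1, g2, g3, g4⟩ := family_main (1 + M * i) (v0 + M * j) S i j
      (by rw [hM]) (by rw [hM, hv0]) hS hsq
    refine ⟨d, g1, g2, by rw [hc0]; exact g3, ?_⟩
    intro X hX
    refine g4 X ?_
    rw [hc0] at hX
    exact_mod_cast hX
  refine final_abstract (fun X => {d : ℤ | GoodRank5sq X d}.ncard) (72 * M)
    (c0 * (9 * M ^ 2) ^ 3) C (by omega) (by positivity) hC ?_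
  intro m hm X hX
  obtain ⟨T, hT, hTS⟩ := counting M v0 (by omega) (by omega) hloc m hm
  exact count_fin M v0 c0 _ C m rfl (by positivity) (by omega) hdiv T hT hTS hfam X
    (by exact_mod_cast hX)
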